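/- Let A be an n×n real positive-semidefinite matrix, let 1 ≤ k ≤ n, and let Ω be an n×k random matrix with independent standard normal entries. Define the Nyström approximation Â = AΩ((Ω*AΩ)†)Ω*A. Then E√(‖A − Â‖_∞) ≤ min over natural numbers ϱ with ϱ < k − 1 of [(1 + √(ϱ/(k − ϱ − 1)))·√(σ_{ϱ+1}(A)) + (e·√k/(k − ϱ))·√(σ_{ϱ+1}^{(1)}(A))], where e is Euler's number. -/

import Mathlib

open Matrix MeasureTheory ProbabilityTheory
open scoped ENNReal NNReal ComplexOrder Classical

namespace PsdSketch

variable {𝕜 : Type*} [RCLike 𝕜]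

/-- The four Penrose conditions characterizing the Moore–Penrose pseudoinverse. -/
def IsMoorePenrose {m k : ℕ} (M : Matrix (Fin m) (Fin k) 𝕜)
    (X : Matrix (Fin k) (Fin m) 𝕜) : Prop :=
  M * X * M = M ∧ X * M * X = X ∧ (M * X)ᴴ = M * X ∧ (X * M)ᴴ = X * M

/-- The Moore–Penrose pseudoinverse `M†` (the unique matrix satisfying the
Penrose conditions). -/
noncomputable def pinv {m k : ℕ} (M : Matrix (Fin m) (Fin k) 𝕜) :
    Matrix (Fin k) (Fin m) 𝕜 :=
  if h : ∃ X, IsMoorePenrose M X then h.choose else 0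

/-- The Nyström approximation `Â = A Ω ((Ω* A Ω)†) Ω* A`. -/
noncomputable def nystrom {n k : ℕ} (A : Matrix (Fin n) (Fin n) 𝕜)
    (Ω : Matrix (Fin n) (Fin k) 𝕜) : Matrix (Fin n) (Fin n) 𝕜 :=
  A * Ω * pinv (Ωᴴ * A * Ω) * Ωᴴ * A

/-- The `i`-th singular value of a square matrix, 0-indexed and listed in weakly
decreasing order (so `sval M 0 = σ₁(M)`), with `sval M i = 0` for `i ≥ n`. -/
noncomputable def sval {n : ℕ} (M : Matrix (Fin n) (Fin n) 𝕜) (i : ℕ) : ℝ :=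
  if h : i < n then
    Real.sqrt
      ((Matrix.posSemidef_conjTranspose_mul_self M).1.eigenvalues
        (Tuple.sort (Matrix.posSemidef_conjTranspose_mul_self M).1.eigenvalues
          (Fin.rev ⟨i, h⟩)))
  else 0

/-- The Schatten `p`-norm: the `ℓ_p` norm of the vector of singular values. -/
noncomputable def schatten {n : ℕ} (p : ℝ≥0∞) (M : Matrix (Fin n) (Fin n) 𝕜) : ℝ :=
  if p = ∞ then sval M 0
  else (∑ i ∈ Finset.range n, sval M i ^ p.toReal) ^ (1 / p.toReal)

/-- `σ_{r+1}^{(p)}(M)`, the optimal rank-`r` approximation error of `M` in the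
Schatten `p`-norm: `(Σ_{i > r} σ_i(M)^p)^{1/p}` (for `p = ∞`, `σ_{r+1}(M)`). -/
noncomputable def tailNorm {n : ℕ} (p : ℝ≥0∞) (M : Matrix (Fin n) (Fin n) 𝕜)
    (r : ℕ) : ℝ :=
  if p = ∞ then sval M r
  else (∑ i ∈ Finset.Ico r n, sval M i ^ p.toReal) ^ (1 / p.toReal)

/-- `B` is a (simultaneous) best rank-`r` approximation of `M` with respect to every
Schatten `p`-norm; this is the defining property of an `r`-truncated SVD `⟦M⟧_r`. -/
def IsBestRankApprox {n : ℕ} (M B : Matrix (Fin n) (Fin n) 𝕜) (r : ℕ) : Prop :=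
  B.rank ≤ r ∧
    ∀ p : ℝ≥0∞, 1 ≤ p → ∀ C : Matrix (Fin n) (Fin n) 𝕜, C.rank ≤ r →
      schatten p (M - B) ≤ schatten p (M - C)

/-- `⟦M⟧_r`: a best rank-`r` approximation of `M` (an `r`-truncated SVD). -/
noncomputable def truncate {n : ℕ} (M : Matrix (Fin n) (Fin n) 𝕜) (r : ℕ) :
    Matrix (Fin n) (Fin n) 𝕜 :=
  if h : ∃ B, IsBestRankApprox M B r then h.choose else 0

/-- The distribution of an `n × k` random matrix with independent standard normal
entries (matrices identified with functions `Fin n → Fin k → ℝ`). -/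
noncomputable def gaussianEnsemble (n k : ℕ) : Measure (Fin n → Fin k → ℝ) :=
  Measure.pi fun _ => Measure.pi fun _ => gaussianReal 0 1

section Measures

/-- standard Gaussian vector law -/
noncomputable abbrev gv (ι : Type*) [Fintype ι] : Measure (ι → ℝ) :=
  Measure.pi fun _ => gaussianReal 0 1

/-- standard Gaussian matrix law -/
noncomputable abbrev gm (ι κ : Type*) [Fintype ι] [Fintype κ] : Measure (ι → κ → ℝ) :=
  Measure.pi fun _ => gv κ

variable {ι κ : Type*} [Fintype ι] [Fintype κ]

lemma norm_toLp_sq (v : ι → ℝ) : ‖WithLp.toLp 2 v‖ ^ 2 = v ⬝ᵥ v := by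
  rw [EuclideanSpace.real_norm_sq_eq]
  simp [dotProduct, sq]

lemma rot_vec [DecidableEq ι] (Q : Matrix ι ι ℝ) (hQ : Q ∈ Matrix.orthogonalGroup ι ℝ) :
    MeasurePreserving (fun g : ι → ℝ => Q *ᵥ g) (gv ι) (gv ι) := by
  have hQ' : Q * star Q = 1 := (Matrix.mem_orthogonalGroup_iff ι ℝ).1 hQ
  have hQ'' : star Q * Q = 1 := (Matrix.mem_orthogonalGroup_iff' ι ℝ).1 hQ
  have hmeas : Measurable (fun g : ι → ℝ => Q *ᵥ g) := by
    apply Continuous.measurable; fun_prop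
  refine ⟨hmeas, ?_⟩
  let e : EuclideanSpace ℝ ι ≃ₗᵢ[ℝ] EuclideanSpace ℝ ι :=
    { toFun := fun x => WithLp.toLp 2 (Q *ᵥ x.ofLp)
      invFun := fun x => WithLp.toLp 2 (star Q *ᵥ x.ofLp)
      map_add' := by intro x y; simp [Matrix.mulVec_add]
      map_smul' := by intro c x; simp [Matrix.mulVec_smul]
      left_inv := by intro x; simp [Matrix.mulVec_mulVec, hQ'']
      right_inv := by intro x; simp [Matrix.mulVec_mulVec, hQ']
      norm_map' := by
        intro x
        have : ‖WithLp.toLp 2 (Q *ᵥ x.ofLp)‖ ^ 2 = ‖x‖ ^ 2 := by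
          rw [norm_toLp_sq, show x = WithLp.toLp 2 x.ofLp from rfl, norm_toLp_sq,
            Matrix.dotProduct_mulVec, Matrix.vecMul_mulVec]
          have : Qᵀ * Q = 1 := by simpa [star_eq_conjTranspose] using hQ''
          simp [this]
        exact (sq_eq_sq₀ (norm_nonneg _) (norm_nonneg _)).1 this }
  have h1 := stdGaussian_map e
  rw [← map_pi_eq_stdGaussian] at h1
  have h2 := congrArg (Measure.map (WithLp.ofLp)) h1
  rw [Measure.map_map (by fun_prop) (by fun_prop), Measure.map_map (by fun_prop) (by fun_prop),
    Measure.map_map (by fun_prop) (by fun_prop)] at h2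
  have h3 : (WithLp.ofLp ∘ (WithLp.toLp 2 : (ι → ℝ) → EuclideanSpace ℝ ι)) = id := rfl
  rw [h3, Measure.map_id] at h2
  exact h2

lemma uncurry_mp : MeasurePreserving (fun (G : ι → κ → ℝ) (x : ι × κ) => G x.1 x.2)
    (gm ι κ) (gv (ι × κ)) := by
  have hm : Measurable (fun (G : ι → κ → ℝ) (x : ι × κ) => G x.1 x.2) := by fun_prop
  refine ⟨hm, ?_⟩
  symm
  apply Measure.pi_eq
  intro s hs
  rw [Measure.map_apply hm (MeasurableSet.univ_pi hs)]
  have : (fun (G : ι → κ → ℝ) (x : ι × κ) => G x.1 x.2) ⁻¹' (Set.univ.pi s)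
      = Set.univ.pi (fun i => Set.univ.pi (fun j => s (i, j))) := by
    ext G; simp
  rw [this, Measure.pi_pi]
  simp_rw [Measure.pi_pi]
  rw [Fintype.prod_prod_type]

lemma curry_mp : MeasurePreserving (fun (g : ι × κ → ℝ) i j => g (i, j))
    (gv (ι × κ)) (gm ι κ) := by
  have hm : Measurable (fun (g : ι × κ → ℝ) i j => g (i, j)) := by fun_prop
  refine ⟨hm, ?_⟩
  rw [← (uncurry_mp (ι := ι) (κ := κ)).map_eq, Measure.map_map hm (uncurry_mp).measurable]
  exact Measure.map_id

lemma rot_mat [DecidableEq ι] (Q : Matrix ι ι ℝ) (hQ : Q ∈ Matrix.orthogonalGroup ι ℝ) :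
    MeasurePreserving (fun (G : ι → κ → ℝ) i j => (Q * Matrix.of G) i j) (gm ι κ) (gm ι κ) := by
  have h1 : Matrix.kroneckerMap (· * ·) Q (1 : Matrix κ κ ℝ) ∈ Matrix.orthogonalGroup (ι × κ) ℝ :=
    Matrix.kronecker_mem_unitary hQ (one_mem _)
  have := curry_mp.comp ((rot_vec _ h1).comp uncurry_mp)
  convert this using 1
  funext G i j
  simp [Matrix.mul_apply, Matrix.mulVec, dotProduct, Fintype.sum_prod_type, Matrix.one_apply]

end Measures

section PiTools

lemma pi_ite_mp {ι α : Type*} [Fintype ι] [MeasurableSpace α] (μ : Measure α)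
    [IsProbabilityMeasure μ] (p : ι → Prop) :
    MeasurePreserving (fun (x : (ι → α) × (ι → α)) i => if p i then x.1 i else x.2 i)
      ((Measure.pi fun _ : ι => μ).prod (Measure.pi fun _ : ι => μ))
      (Measure.pi fun _ : ι => μ) := by
  have hm : Measurable (fun (x : (ι → α) × (ι → α)) i => if p i then x.1 i else x.2 i) := by
    refine measurable_pi_lambda _ fun i => ?_
    by_cases h : p i <;> simp only [h, if_true, if_false] <;> fun_prop
  refine ⟨hm, ?_⟩
  symm
  apply Measure.pi_eq
  intro s hs
  rw [Measure.map_apply hm (MeasurableSet.univ_pi hs)]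
  have : (fun (x : (ι → α) × (ι → α)) i => if p i then x.1 i else x.2 i) ⁻¹' (Set.univ.pi s)
      = (Set.univ.pi (fun i => if p i then s i else Set.univ)) ×ˢ
        (Set.univ.pi (fun i => if p i then Set.univ else s i)) := by
    ext x
    simp only [Set.mem_preimage, Set.mem_pi, Set.mem_univ, true_imp_iff, Set.mem_prod,
      ← forall_and]
    refine forall_congr' fun i => ?_
    by_cases h : p i <;> simp [h]
  rw [this, Measure.prod_prod, Measure.pi_pi, Measure.pi_pi, ← Finset.prod_mul_distrib]
  refine Finset.prod_congr rfl fun i _ => ?_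
  by_cases h : p i <;> simp [h]

lemma pi_update_mp {ι α : Type*} [Fintype ι] [DecidableEq ι] [MeasurableSpace α] (μ : Measure α)
    [IsProbabilityMeasure μ] (i : ι) :
    MeasurePreserving (fun (x : α × (ι → α)) => Function.update x.2 i x.1)
      (μ.prod (Measure.pi fun _ : ι => μ))
      (Measure.pi fun _ : ι => μ) := by
  have hm : Measurable (fun (x : α × (ι → α)) => Function.update x.2 i x.1) := by
    refine measurable_pi_lambda _ fun j => ?_
    by_cases h : j = i
    · subst h; simpa using measurable_fst
    · simp only [Function.update_of_ne h]; fun_prop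
  refine ⟨hm, ?_⟩
  symm
  apply Measure.pi_eq
  intro s hs
  rw [Measure.map_apply hm (MeasurableSet.univ_pi hs)]
  have : (fun (x : α × (ι → α)) => Function.update x.2 i x.1) ⁻¹' (Set.univ.pi s)
      = (s i) ×ˢ (Set.univ.pi (fun j => if j = i then Set.univ else s j)) := by
    ext x
    simp only [Set.mem_preimage, Set.mem_pi, Set.mem_univ, true_imp_iff, Set.mem_prod]
    constructor
    · intro h
      refine ⟨by simpa using h i, fun j => ?_⟩
      by_cases hj : j = i
      · simp [hj]
      · simpa [hj] using h j
    · rintro ⟨h1, h2⟩ j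
      by_cases hj : j = i
      · subst hj; simpa using h1
      · simpa [hj] using h2 j
  rw [this, Measure.prod_prod, Measure.pi_pi,
    ← Finset.mul_prod_erase Finset.univ (fun j => μ (s j)) (Finset.mem_univ i),
    ← Finset.mul_prod_erase Finset.univ _ (Finset.mem_univ i)]
  simp only [if_true, measure_univ, one_mul]
  congr 1
  refine Finset.prod_congr rfl fun j hj => ?_
  simp [Finset.ne_of_mem_erase hj]

lemma pi_comp_mp {ι κ α : Type*} [Fintype ι] [Fintype κ] [MeasurableSpace α] (μ : Measure α)
    [IsProbabilityMeasure μ] (e : κ → ι) (he : Function.Injective e) :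
    MeasurePreserving (fun (x : ι → α) j => x (e j))
      (Measure.pi fun _ : ι => μ) (Measure.pi fun _ : κ => μ) := by
  have hm : Measurable (fun (x : ι → α) j => x (e j)) := by fun_prop
  refine ⟨hm, ?_⟩
  symm
  apply Measure.pi_eq
  intro s hs
  rw [Measure.map_apply hm (MeasurableSet.univ_pi hs)]
  have : (fun (x : ι → α) j => x (e j)) ⁻¹' (Set.univ.pi s)
      = (Set.univ.pi (fun i => if h : ∃ j, e j = i then s h.choose else Set.univ)) := by
    ext x
    simp only [Set.mem_preimage, Set.mem_pi, Set.mem_univ, true_imp_iff]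
    constructor
    · intro h i
      split_ifs with hi
      · have := h hi.choose
        rwa [hi.choose_spec] at this
      · trivial
    · intro h j
      have := h (e j)
      have hj : ∃ j', e j' = e j := ⟨j, rfl⟩
      rw [dif_pos hj] at this
      rwa [he hj.choose_spec] at this
  rw [this, Measure.pi_pi]
  rw [← Finset.prod_subset (Finset.subset_univ (Finset.univ.image e))]
  · rw [Finset.prod_image (fun a _ b _ h => he h)]
    refine Finset.prod_congr rfl fun j _ => ?_
    have hj : ∃ j', e j' = e j := ⟨j, rfl⟩
    rw [dif_pos hj, he hj.choose_spec]
  · intro i _ hi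
    rw [dif_neg]
    · simp
    · rintro ⟨j, rfl⟩; exact hi (Finset.mem_image_of_mem _ (Finset.mem_univ _))

end PiTools

section Stein

lemma hasDerivAt_pdf (x : ℝ) :
    HasDerivAt (gaussianPDFReal 0 1) (-x * gaussianPDFReal 0 1 x) x := by
  have : gaussianPDFReal 0 1 = fun x => (√(2 * Real.pi * (1:ℝ≥0)))⁻¹ * Real.exp (-(x - 0) ^ 2 / (2 * (1:ℝ≥0))) := by
    funext y; rfl
  rw [this]
  have h : HasDerivAt (fun x : ℝ => -(x - 0) ^ 2 / (2 * ((1:ℝ≥0):ℝ))) (-x) x := by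
    have := ((((hasDerivAt_id x).sub_const 0).pow 2).neg).div_const (2 * ((1:ℝ≥0):ℝ))
    refine this.congr_deriv ?_
    norm_num
    ring
  refine (h.exp.const_mul ((√(2 * Real.pi * (1:ℝ≥0)))⁻¹)).congr_deriv ?_
  ring

lemma stein1 (f f' : ℝ → ℝ) (hf : ∀ x, HasDerivAt f (f' x) x)
    (h0 : Integrable f (gaussianReal 0 1)) (h1 : Integrable (fun x => x * f x) (gaussianReal 0 1))
    (h2 : Integrable f' (gaussianReal 0 1)) :
    ∫ x, x * f x ∂(gaussianReal 0 1) = ∫ x, f' x ∂(gaussianReal 0 1) := by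
  have conv : ∀ g : ℝ → ℝ, Integrable g (gaussianReal 0 1) →
      Integrable (fun x => gaussianPDFReal 0 1 x * g x) := by
    intro g hg
    rw [gaussianReal_of_var_ne_zero 0 one_ne_zero] at hg
    rw [integrable_withDensity_iff_integrable_smul' (measurable_gaussianPDF 0 1)
      (by simp [gaussianPDF_lt_top])] at hg
    simpa [toReal_gaussianPDF] using hg
  rw [integral_gaussianReal_eq_integral_smul one_ne_zero,
    integral_gaussianReal_eq_integral_smul one_ne_zero]
  have := integral_mul_deriv_eq_deriv_mul_of_integrable (u := f) (u' := f')
    (v := gaussianPDFReal 0 1) (v' := fun x => -x * gaussianPDFReal 0 1 x)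
    (fun x _ => hf x) (fun x _ => hasDerivAt_pdf x) ?_ ?_ ?_
  · simp only [smul_eq_mul]
    have e1 : ∀ x, gaussianPDFReal 0 1 x * (x * f x) = -(f x * (-x * gaussianPDFReal 0 1 x)) := by
      intro x; ring
    simp_rw [e1]
    rw [integral_neg, this, neg_neg]
    simp_rw [mul_comm]
  · refine ((conv _ h1).neg).congr (Filter.Eventually.of_forall fun x => ?_)
    simp; ring
  · refine ((conv _ h2)).congr (Filter.Eventually.of_forall fun x => ?_)
    simp; ring
  · refine ((conv _ h0)).congr (Filter.Eventually.of_forall fun x => ?_)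
    simp; ring

lemma stein_pi {ι : Type*} [Fintype ι] [DecidableEq ι] (i : ι) (f f' : (ι → ℝ) → ℝ)
    (hf : ∀ g s, HasDerivAt (fun s => f (Function.update g i s)) (f' (Function.update g i s)) s)
    (h0 : Integrable f (gv ι)) (h1 : Integrable (fun x => x i * f x) (gv ι))
    (h2 : Integrable f' (gv ι)) :
    ∫ x, x i * f x ∂(gv ι) = ∫ x, f' x ∂(gv ι) := by
  have mp : MeasurePreserving (fun (x : ℝ × (ι → ℝ)) => Function.update x.2 i x.1)
      ((gaussianReal 0 1).prod (gv ι)) (gv ι) := pi_update_mp (ι := ι) (gaussianReal 0 1) i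
  have k0 := mp.integrable_comp_of_integrable h0
  have k1 := mp.integrable_comp_of_integrable h1
  have k2 := mp.integrable_comp_of_integrable h2
  have tr : ∀ F : (ι → ℝ) → ℝ, Integrable F (gv ι) → ∫ x, F x ∂(gv ι) =
      ∫ g, ∫ s, F (Function.update g i s) ∂(gaussianReal 0 1) ∂(gv ι) := by
    intro F hF
    have k := mp.integrable_comp_of_integrable hF
    refine Eq.trans ?_ (integral_prod_symm _ k)
    conv_lhs => rw [← mp.map_eq]
    rw [integral_map mp.measurable.aemeasurable]
    · rfl
    · rw [mp.map_eq]; exact hF.1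
  rw [tr _ h1, tr _ h2]
  refine integral_congr_ae ?_
  filter_upwards [k0.prod_left_ae, k1.prod_left_ae, k2.prod_left_ae] with g a0 a1 a2
  have := stein1 (fun s => f (Function.update g i s)) (fun s => f' (Function.update g i s))
    (hf g) a0 (by simpa using a1) a2
  simpa using this

end Stein

section Slepian

variable {N J : Type*} [Fintype N] [Fintype J]

lemma integrable_coord (a : J) : Integrable (fun g : J → ℝ => g a) (gv J) := by
  have h : Integrable (fun x : ℝ => x) (gaussianReal 0 1) :=
    memLp_one_iff_integrable.1 (memLp_id_gaussianReal 1)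
  exact (measurePreserving_eval (fun _ : J => gaussianReal 0 1) a).integrable_comp_of_integrable h

/-- softmax weights -/
noncomputable def smax (z : N → ℝ) (i : N) : ℝ := Real.exp (z i) / ∑ j, Real.exp (z j)

/-- log-sum-exp -/
noncomputable def lse (z : N → ℝ) : ℝ := Real.log (∑ j, Real.exp (z j))

lemma sumexp_pos [Nonempty N] (z : N → ℝ) : 0 < ∑ j, Real.exp (z j) :=
  Finset.sum_pos (fun _ _ => Real.exp_pos _) Finset.univ_nonempty

lemma smax_nonneg (z : N → ℝ) (i : N) : 0 ≤ smax z i := by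
  unfold smax; positivity

lemma smax_le_one [Nonempty N] (z : N → ℝ) (i : N) : smax z i ≤ 1 := by
  unfold smax
  rw [div_le_one (sumexp_pos z)]
  exact Finset.single_le_sum (f := fun j => Real.exp (z j)) (fun _ _ => (Real.exp_pos _).le)
    (Finset.mem_univ i)

lemma le_lse [Nonempty N] (z : N → ℝ) (i : N) : z i ≤ lse z := by
  unfold lse
  rw [Real.le_log_iff_exp_le (sumexp_pos z)]
  exact Finset.single_le_sum (f := fun j => Real.exp (z j)) (fun _ _ => (Real.exp_pos _).le)
    (Finset.mem_univ i)

lemma lse_le [Nonempty N] (z : N → ℝ) (c : ℝ) (h : ∀ i, z i ≤ c) :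
    lse z ≤ c + Real.log (Fintype.card N) := by
  unfold lse
  rw [Real.log_le_iff_le_exp (sumexp_pos z), Real.exp_add, Real.exp_log (by
    exact_mod_cast Fintype.card_pos)]
  calc _ ≤ ∑ _j : N, Real.exp c := Finset.sum_le_sum fun i _ => Real.exp_le_exp.2 (h i)
    _ = _ := by simp [mul_comm]

lemma hasDerivAt_lse [Nonempty N] (z : ℝ → N → ℝ) (z' : N → ℝ) (t : ℝ)
    (h : ∀ i, HasDerivAt (fun t => z t i) (z' i) t) :
    HasDerivAt (fun t => lse (z t)) (∑ i, smax (z t) i * z' i) t := by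
  unfold lse
  have h1 : HasDerivAt (fun t => ∑ j, Real.exp (z t j)) (∑ j, Real.exp (z t j) * z' j) t :=
    HasDerivAt.fun_sum fun i _ => (h i).exp
  refine (h1.log (sumexp_pos (z t)).ne').congr_deriv ?_
  rw [Finset.sum_div]
  refine Finset.sum_congr rfl fun i _ => ?_
  unfold smax; ring

lemma hasDerivAt_smax [Nonempty N] [DecidableEq N] (z : ℝ → N → ℝ) (z' : N → ℝ) (t : ℝ) (i : N)
    (h : ∀ i, HasDerivAt (fun t => z t i) (z' i) t) :
    HasDerivAt (fun t => smax (z t) i)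
      (∑ j, smax (z t) i * ((if i = j then 1 else 0) - smax (z t) j) * z' j) t := by
  unfold smax
  have h1 : HasDerivAt (fun t => ∑ j, Real.exp (z t j)) (∑ j, Real.exp (z t j) * z' j) t :=
    HasDerivAt.fun_sum fun i _ => (h i).exp
  have h0 := (sumexp_pos (z t)).ne'
  refine ((h i).exp.div h1 h0).congr_deriv ?_
  simp_rw [mul_sub, sub_mul, Finset.sum_sub_distrib]
  have e2 : ∑ j, Real.exp (z t i) / (∑ k, Real.exp (z t k)) * (Real.exp (z t j) / (∑ k, Real.exp (z t k))) * z' j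
      = Real.exp (z t i) / (∑ k, Real.exp (z t k)) / (∑ k, Real.exp (z t k)) * ∑ j, Real.exp (z t j) * z' j := by
    rw [Finset.mul_sum]
    refine Finset.sum_congr rfl fun i _ => ?_
    ring
  rw [e2]
  have e1' : ∑ x, Real.exp (z t i) / (∑ j, Real.exp (z t j)) * (if i = x then 1 else 0) * z' x
      = Real.exp (z t i) / (∑ k, Real.exp (z t k)) * z' i := by simp
  rw [e1']
  field_simp

lemma continuous_lse [Nonempty N] : Continuous (lse : (N → ℝ) → ℝ) := by
  unfold lse
  refine Continuous.log (by fun_prop) fun z => (sumexp_pos z).ne'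

lemma continuous_smax [Nonempty N] (i : N) : Continuous (fun z : N → ℝ => smax z i) := by
  unfold smax
  refine Continuous.div (by fun_prop) (by fun_prop) fun z => (sumexp_pos z).ne'

/-- linear process -/
def lin (x : N → J → ℝ) (g : J → ℝ) (i : N) : ℝ := ∑ a, x i a * g a

lemma continuous_lin (x : N → J → ℝ) : Continuous (lin x) := by
  unfold lin; fun_prop

lemma integrable_lin (x : N → J → ℝ) (i : N) : Integrable (fun g => lin x g i) (gv J) := by
  unfold lin
  exact integrable_finsetSum _ fun a _ => (integrable_coord a).const_mul _

lemma integrable_lse_lin [Nonempty N] (x : N → J → ℝ) :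
    Integrable (fun g => lse (lin x g)) (gv J) := by
  have hb : Integrable (fun g => ∑ i, |lin x g i| + Real.log (Fintype.card N)) (gv J) :=
    (integrable_finsetSum _ fun i _ => (integrable_lin x i).abs).add (integrable_const _)
  refine hb.mono' (continuous_lse.comp (continuous_lin x)).aestronglyMeasurable
    (Filter.Eventually.of_forall fun g => ?_)
  have hs : ∀ i, |lin x g i| ≤ ∑ i, |lin x g i| := fun i =>
    Finset.single_le_sum (f := fun i => |lin x g i|) (fun _ _ => abs_nonneg _) (Finset.mem_univ i)
  have hl : 0 ≤ Real.log (Fintype.card N) := Real.log_natCast_nonneg _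
  rw [Real.norm_eq_abs, abs_le]
  constructor
  · obtain ⟨i⟩ := ‹Nonempty N›
    haveI : Nonempty N := ⟨i⟩
    have := le_lse (lin x g) i
    have := neg_abs_le (lin x g i)
    have := hs i
    linarith
  · exact lse_le _ _ fun i => (le_abs_self _).trans (hs i)

lemma slepian_lse [Nonempty N] [DecidableEq N] [DecidableEq J] (x y : N → J → ℝ)
    (hxy : ∀ i j, ∑ a, x i a * y j a = 0)
    (hv : ∀ i, ∑ a, x i a * x i a = ∑ a, y i a * y i a)
    (hc : ∀ i j, ∑ a, y i a * y j a ≤ ∑ a, x i a * x j a) :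
    ∫ g, lse (lin x g) ∂(gv J) ≤ ∫ g, lse (lin y g) ∂(gv J) := by
  let z : ℝ → N → J → ℝ := fun θ i a => Real.cos θ * y i a + Real.sin θ * x i a
  let z' : ℝ → N → J → ℝ := fun θ i a => -Real.sin θ * y i a + Real.cos θ * x i a
  have hz : ∀ θ i a, HasDerivAt (fun θ => z θ i a) (z' θ i a) θ := fun θ i a =>
    ((Real.hasDerivAt_cos θ).mul_const _).add ((Real.hasDerivAt_sin θ).mul_const _)
  have hlz : ∀ θ g i, HasDerivAt (fun θ => lin (z θ) g i) (lin (z' θ) g i) θ := fun θ g i =>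
    HasDerivAt.fun_sum fun a _ => (hz θ i a).mul_const _
  let φ : ℝ → ℝ := fun θ => ∫ g, lse (lin (z θ) g) ∂(gv J)
  let B : (J → ℝ) → ℝ := fun g => ∑ i : N, ∑ a, (|y i a| + |x i a|) * |g a|
  have hB : Integrable B (gv J) := integrable_finsetSum _ fun i _ => integrable_finsetSum _
    fun a _ => (integrable_coord a).abs.const_mul _
  have hz'b : ∀ θ i a, |z' θ i a| ≤ |y i a| + |x i a| := by
    intro θ i a
    refine (abs_add_le _ _).trans ?_
    rw [abs_mul, abs_mul, abs_neg]
    exact add_le_add (mul_le_of_le_one_left (abs_nonneg _) (Real.abs_sin_le_one θ))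
      (mul_le_of_le_one_left (abs_nonneg _) (Real.abs_cos_le_one θ))
  have hder : ∀ θ, HasDerivAt φ (∫ g, ∑ i, smax (lin (z θ) g) i * lin (z' θ) g i ∂(gv J)) θ := by
    intro θ
    refine (hasDerivAt_integral_of_dominated_loc_of_deriv_le (μ := gv J)
      (F := fun θ g => lse (lin (z θ) g))
      (F' := fun θ g => ∑ i, smax (lin (z θ) g) i * lin (z' θ) g i)
      (s := Set.univ) (bound := B) Filter.univ_mem ?_ ?_ ?_ ?_ hB ?_).2
    · exact Filter.Eventually.of_forall fun θ =>
        (continuous_lse.comp (continuous_lin _)).aestronglyMeasurable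
    · exact integrable_lse_lin _
    · refine Continuous.aestronglyMeasurable ?_
      refine continuous_finsetSum _ fun i _ => Continuous.mul ?_ ?_
      · exact (continuous_smax i).comp (continuous_lin _)
      · exact (continuous_apply i).comp (continuous_lin _)
    · refine Filter.Eventually.of_forall fun g θ _ => ?_
      refine (norm_sum_le _ _).trans (Finset.sum_le_sum fun i _ => ?_)
      rw [norm_mul]
      refine (mul_le_of_le_one_left (norm_nonneg _) ?_).trans ?_
      · rw [Real.norm_eq_abs, abs_of_nonneg (smax_nonneg _ _)]; exact smax_le_one _ _
      · refine (norm_sum_le _ _).trans (Finset.sum_le_sum fun a _ => ?_)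
        rw [norm_mul]
        exact mul_le_mul_of_nonneg_right (hz'b θ i a) (norm_nonneg _)
    · exact Filter.Eventually.of_forall fun g θ _ => hasDerivAt_lse _ _ _ (hlz θ g)
  -- Stein
  have hst : ∀ θ i a, ∫ g, g a * smax (lin (z θ) g) i ∂(gv J) =
      ∫ g, ∑ j, smax (lin (z θ) g) i * ((if i = j then 1 else 0) - smax (lin (z θ) g) j) * z θ j a
        ∂(gv J) := by
    intro θ i a
    have cs : ∀ i, Continuous (fun g => smax (lin (z θ) g) i) := fun i =>
      (continuous_smax i).comp (continuous_lin _)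
    refine stein_pi a (fun g => smax (lin (z θ) g) i) _ ?_ ?_ ?_ ?_
    · intro g s
      refine hasDerivAt_smax _ (fun j => z θ j a) s i fun j => ?_
      unfold lin
      have : ∀ s, ∑ b, z θ j b * Function.update g a s b
          = z θ j a * s + ∑ b ∈ Finset.univ.erase a, z θ j b * g b := by
        intro s
        rw [← Finset.add_sum_erase Finset.univ _ (Finset.mem_univ a)]
        simp only [Function.update_self]
        congr 1
        refine Finset.sum_congr rfl fun b hb => ?_
        rw [Function.update_of_ne (Finset.ne_of_mem_erase hb)]
      simp_rw [this]
      simpa using ((hasDerivAt_id s).const_mul (z θ j a)).add_const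
        (∑ b ∈ Finset.univ.erase a, z θ j b * g b)
    · refine (integrable_const (1:ℝ)).mono' (cs i).aestronglyMeasurable
        (Filter.Eventually.of_forall fun g => ?_)
      rw [Real.norm_eq_abs, abs_of_nonneg (smax_nonneg _ _)]; exact smax_le_one _ _
    · refine (integrable_coord a).abs.mono' ((continuous_apply a).mul (cs i)).aestronglyMeasurable
        (Filter.Eventually.of_forall fun g => ?_)
      rw [norm_mul, Real.norm_eq_abs]
      refine mul_le_of_le_one_right (abs_nonneg _) ?_
      rw [Real.norm_eq_abs, abs_of_nonneg (smax_nonneg _ _)]; exact smax_le_one _ _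
    · refine integrable_finsetSum _ fun j _ => Integrable.mul_const ?_ _
      refine (integrable_const (1:ℝ)).mono'
        ((cs i).mul (continuous_const.sub (cs j))).aestronglyMeasurable
        (Filter.Eventually.of_forall fun g => ?_)
      have a1 := smax_nonneg (lin (z θ) g) i
      have a2 := smax_le_one (lin (z θ) g) i
      have a3 := smax_nonneg (lin (z θ) g) j
      have a4 := smax_le_one (lin (z θ) g) j
      rw [norm_mul, Real.norm_eq_abs, Real.norm_eq_abs]
      refine mul_le_one₀ (by rwa [abs_of_nonneg a1]) (abs_nonneg _) ?_
      rw [abs_le]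
      split_ifs <;> constructor <;> linarith
  have hintg : ∀ θ i a, Integrable (fun g : J → ℝ => g a * smax (lin (z θ) g) i) (gv J) := by
    intro θ i a
    refine (integrable_coord a).abs.mono' ((continuous_apply a).mul
      ((continuous_smax i).comp (continuous_lin _))).aestronglyMeasurable
        (Filter.Eventually.of_forall fun g => ?_)
    rw [norm_mul, Real.norm_eq_abs]
    refine mul_le_of_le_one_right (abs_nonneg _) ?_
    rw [Real.norm_eq_abs, abs_of_nonneg (smax_nonneg _ _)]; exact smax_le_one _ _
  have hintg2 : ∀ θ i j, Integrable (fun g : J → ℝ =>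
      smax (lin (z θ) g) i * ((if i = j then 1 else 0) - smax (lin (z θ) g) j)) (gv J) := by
    intro θ i j
    refine (integrable_const (1:ℝ)).mono'
        (((continuous_smax i).comp (continuous_lin _)).mul (continuous_const.sub
          ((continuous_smax j).comp (continuous_lin _)))).aestronglyMeasurable
        (Filter.Eventually.of_forall fun g => ?_)
    have a1 := smax_nonneg (lin (z θ) g) i
    have a2 := smax_le_one (lin (z θ) g) i
    have a3 := smax_nonneg (lin (z θ) g) j
    have a4 := smax_le_one (lin (z θ) g) j
    rw [norm_mul, Real.norm_eq_abs, Real.norm_eq_abs]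
    refine mul_le_one₀ (by rwa [abs_of_nonneg a1]) (abs_nonneg _) ?_
    rw [abs_le]
    split_ifs <;> constructor <;> linarith
  have hinner : ∀ θ i j, ∑ a, z' θ i a * z θ j a = Real.sin θ * Real.cos θ *
      (∑ a, x i a * x j a - ∑ a, y i a * y j a) := by
    intro θ i j
    have e : ∀ a, z' θ i a * z θ j a = Real.sin θ * Real.cos θ * (x i a * x j a)
        - Real.sin θ * Real.cos θ * (y i a * y j a) + Real.cos θ ^ 2 * (x i a * y j a)
        - Real.sin θ ^ 2 * (x j a * y i a) := by
      intro a; simp only [z, z']; ring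
    simp_rw [e]
    rw [Finset.sum_sub_distrib, Finset.sum_add_distrib, Finset.sum_sub_distrib,
      ← Finset.mul_sum, ← Finset.mul_sum, ← Finset.mul_sum, ← Finset.mul_sum, hxy, hxy]
    ring
  have hdv : ∀ θ, (∫ g, ∑ i, smax (lin (z θ) g) i * lin (z' θ) g i ∂(gv J)) =
      ∑ i, ∑ j, (∑ a, z' θ i a * z θ j a) * ∫ g, smax (lin (z θ) g) i *
        ((if i = j then 1 else 0) - smax (lin (z θ) g) j) ∂(gv J) := by
    intro θ
    have e : ∀ g i, smax (lin (z θ) g) i * lin (z' θ) g i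
        = ∑ a, z' θ i a * (g a * smax (lin (z θ) g) i) := by
      intro g i
      unfold lin
      rw [Finset.mul_sum]
      refine Finset.sum_congr rfl fun a _ => ?_
      ring
    simp_rw [e]
    rw [integral_finsetSum _ fun i _ => integrable_finsetSum _ fun a _ => (hintg θ i a).const_mul _]
    refine Finset.sum_congr rfl fun i _ => ?_
    rw [integral_finsetSum _ fun a _ => (hintg θ i a).const_mul _]
    simp_rw [integral_const_mul, hst]
    have e2 : ∀ a, ∫ g, ∑ j, smax (lin (z θ) g) i * ((if i = j then 1 else 0)
        - smax (lin (z θ) g) j) * z θ j a ∂(gv J) = ∑ j, (∫ g, smax (lin (z θ) g) i *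
        ((if i = j then 1 else 0) - smax (lin (z θ) g) j) ∂(gv J)) * z θ j a := by
      intro a
      rw [integral_finsetSum _ fun j _ => (hintg2 θ i j).mul_const _]
      simp_rw [integral_mul_const]
    simp_rw [e2, Finset.mul_sum]
    rw [Finset.sum_comm]
    refine Finset.sum_congr rfl fun j _ => ?_
    rw [Finset.sum_mul]
    refine Finset.sum_congr rfl fun a _ => ?_
    ring
  have hneg : ∀ θ ∈ Set.Icc 0 (Real.pi / 2),
      (∫ g, ∑ i, smax (lin (z θ) g) i * lin (z' θ) g i ∂(gv J)) ≤ 0 := by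
    intro θ hθ
    rw [hdv]
    refine Finset.sum_nonpos fun i _ => Finset.sum_nonpos fun j _ => ?_
    rw [hinner]
    have s0 : 0 ≤ Real.sin θ := Real.sin_nonneg_of_nonneg_of_le_pi hθ.1 (by
      have := hθ.2; have := Real.pi_pos; linarith)
    have c0 : 0 ≤ Real.cos θ := Real.cos_nonneg_of_neg_pi_div_two_le_of_le (by
      have := hθ.1; have := Real.pi_pos; linarith) hθ.2
    by_cases hij : i = j
    · subst hij; rw [hv i]; simp
    · refine mul_nonpos_of_nonneg_of_nonpos ?_ ?_
      · exact mul_nonneg (mul_nonneg s0 c0) (sub_nonneg.2 (hc i j))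
      · refine integral_nonpos fun g => ?_
        simp only [hij, if_false, zero_sub, mul_neg, Pi.zero_apply]
        have := mul_nonneg (smax_nonneg (lin (z θ) g) i) (smax_nonneg (lin (z θ) g) j)
        linarith
  have hanti : AntitoneOn φ (Set.Icc 0 (Real.pi / 2)) := by
    refine antitoneOn_of_deriv_nonpos (convex_Icc _ _)
      (fun θ _ => (hder θ).continuousAt.continuousWithinAt)
      (fun θ _ => (hder θ).differentiableAt.differentiableWithinAt) fun θ hθ => ?_
    rw [(hder θ).deriv]
    exact hneg θ (interior_subset hθ)
  have hp := Real.pi_pos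
  have := hanti (Set.left_mem_Icc.2 (by positivity)) (Set.right_mem_Icc.2 (by positivity))
    (by positivity : (0:ℝ) ≤ Real.pi / 2)
  simpa [φ, z] using this

end Slepian

section Chevet

variable {N ι κ μ : Type*} [Fintype N] [Fintype ι] [Fintype κ] [Fintype μ]

lemma lse_midpoint [Nonempty N] (z w : N → ℝ) :
    2 * lse z ≤ lse (fun i => z i + w i) + lse (fun i => z i - w i) := by
  unfold lse
  have h1 := sumexp_pos z
  have h2 := sumexp_pos (fun i => z i + w i)
  have h3 := sumexp_pos (fun i => z i - w i)
  rw [← Real.log_mul h2.ne' h3.ne', ← Real.log_rpow h1]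
  refine Real.log_le_log (by positivity) ?_
  have := Finset.sum_mul_sq_le_sq_mul_sq Finset.univ (fun i => Real.exp ((z i + w i)/2))
    (fun i => Real.exp ((z i - w i)/2))
  simp_rw [← Real.exp_add, ← Real.exp_nat_mul] at this
  rw [show (2:ℝ) = ((2:ℕ):ℝ) by norm_num, Real.rpow_natCast]
  have e0 : ∀ i, Real.exp ((z i + w i) / 2 + (z i - w i) / 2) = Real.exp (z i) := fun i => by
    congr 1; ring
  have e1 : ∀ i, Real.exp ((2:ℕ) * ((z i + w i) / 2)) = Real.exp (z i + w i) := fun i => by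
    congr 1; push_cast; ring
  have e2 : ∀ i, Real.exp ((2:ℕ) * ((z i - w i) / 2)) = Real.exp (z i - w i) := fun i => by
    congr 1; push_cast; ring
  simp_rw [e0, e1, e2] at this
  exact this

lemma integral_gv_comp (e : ι → κ) (he : Function.Injective e) (f : (ι → ℝ) → ℝ)
    (hf : Continuous f) : ∫ g, f g ∂(gv ι) = ∫ g, f (fun i => g (e i)) ∂(gv κ) := by
  have hm := pi_comp_mp (gaussianReal 0 1) e he
  have h : gv ι = Measure.map (fun (g : κ → ℝ) i => g (e i)) (gv κ) := hm.map_eq.symm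
  rw [h, integral_map hm.aemeasurable hf.aestronglyMeasurable]

lemma euc_nonneg (v : ι → ℝ) : 0 ≤ ‖WithLp.toLp 2 v‖ := norm_nonneg _

lemma dot_le (v w : ι → ℝ) : v ⬝ᵥ w ≤ ‖WithLp.toLp 2 v‖ * ‖WithLp.toLp 2 w‖ := by
  have := real_inner_le_norm (WithLp.toLp 2 v : EuclideanSpace ℝ ι) (WithLp.toLp 2 w)
  rw [EuclideanSpace.inner_toLp_toLp] at this
  simpa [dotProduct_comm] using this

lemma chevet_lse [Nonempty N] (a : N → ι → ℝ) (b : N → κ → ℝ) :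
    ∫ G, lse (fun i => ∑ p, a i p.1 * b i p.2 * G p) ∂(gv (ι × κ)) ≤
    ∫ g, lse (fun i => ‖WithLp.toLp 2 (b i)‖ * (∑ p, a i p * g (Sum.inl p))
      + ‖WithLp.toLp 2 (a i)‖ * (∑ q, b i q * g (Sum.inr q))) ∂(gv (ι ⊕ κ)) := by
  let x : ℝ → N → ((ι × κ) ⊕ Unit) ⊕ (ι ⊕ κ) → ℝ := fun c i => Sum.elim
    (Sum.elim (fun p => a i p.1 * b i p.2)
      (fun _ => c * (‖WithLp.toLp 2 (a i)‖ * ‖WithLp.toLp 2 (b i)‖))) (fun _ => 0)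
  let y : N → ((ι × κ) ⊕ Unit) ⊕ (ι ⊕ κ) → ℝ := fun i => Sum.elim (fun _ => 0)
    (Sum.elim (fun p => ‖WithLp.toLp 2 (b i)‖ * a i p) (fun q => ‖WithLp.toLp 2 (a i)‖ * b i q))
  have hX : ∀ c i j, ∑ q, x c i q * x c j q = (a i ⬝ᵥ a j) * (b i ⬝ᵥ b j) +
      c ^ 2 * (‖WithLp.toLp 2 (a i)‖ * ‖WithLp.toLp 2 (b i)‖ *
        (‖WithLp.toLp 2 (a j)‖ * ‖WithLp.toLp 2 (b j)‖)) := by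
    intro c i j
    simp only [x, Fintype.sum_sum_type, Sum.elim_inl, Sum.elim_inr, Fintype.sum_prod_type]
    simp only [dotProduct, Finset.sum_mul_sum]
    simp
    congr 1
    · refine Finset.sum_congr rfl fun p _ => Finset.sum_congr rfl fun q _ => by ring
    · ring
  have hY : ∀ i j, ∑ q, y i q * y j q =
      ‖WithLp.toLp 2 (b i)‖ * ‖WithLp.toLp 2 (b j)‖ * (a i ⬝ᵥ a j) +
      ‖WithLp.toLp 2 (a i)‖ * ‖WithLp.toLp 2 (a j)‖ * (b i ⬝ᵥ b j) := by
    intro i j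
    simp only [y, Fintype.sum_sum_type, Sum.elim_inl, Sum.elim_inr]
    simp only [dotProduct, Finset.mul_sum]
    simp
    congr 1
    · refine Finset.sum_congr rfl fun p _ => by ring
    · refine Finset.sum_congr rfl fun p _ => by ring
  have key : ∀ c : ℝ, c ^ 2 = 1 → ∫ g, lse (lin (x c) g) ∂(gv _) ≤ ∫ g, lse (lin y g) ∂(gv _) := by
    intro c hc
    refine slepian_lse _ _ ?_ ?_ ?_
    · intro i j
      simp [x, y, Fintype.sum_sum_type]
    · intro i
      rw [hX, hY, hc, ← norm_toLp_sq, ← norm_toLp_sq]; ring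
    · intro i j
      rw [hX, hY, hc]
      nlinarith [mul_nonneg (sub_nonneg.2 (dot_le (a i) (a j))) (sub_nonneg.2 (dot_le (b i) (b j)))]
  have h0 : ∫ G, lse (fun i => ∑ p, a i p.1 * b i p.2 * G p) ∂(gv (ι × κ)) =
      ∫ g, lse (lin (x 0) g) ∂(gv _) := by
    refine (integral_gv_comp (fun p : ι × κ => (Sum.inl (Sum.inl p) : ((ι × κ) ⊕ Unit) ⊕ (ι ⊕ κ)))
      (fun p q h => by simpa using h) _ ?_).trans ?_
    · exact continuous_lse.comp (by fun_prop)
    congr 1; ext g; congr 1; ext i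
    simp [lin, x, Fintype.sum_sum_type, Finset.mul_sum, mul_assoc]
  have h1 : ∫ g, lse (fun i => ‖WithLp.toLp 2 (b i)‖ * (∑ p, a i p * g (Sum.inl p))
      + ‖WithLp.toLp 2 (a i)‖ * (∑ q, b i q * g (Sum.inr q))) ∂(gv (ι ⊕ κ)) =
      ∫ g, lse (lin y g) ∂(gv _) := by
    refine (integral_gv_comp (fun p : ι ⊕ κ => (Sum.inr p : ((ι × κ) ⊕ Unit) ⊕ (ι ⊕ κ)))
      (fun p q h => by simpa using h) _ ?_).trans ?_
    · exact continuous_lse.comp (by fun_prop)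
    congr 1; ext g; congr 1; ext i
    simp [lin, y, Fintype.sum_sum_type, Finset.mul_sum, mul_assoc]
  rw [h0, h1]
  have h2 : 2 * ∫ g, lse (lin (x 0) g) ∂(gv _) ≤
      ∫ g, lse (lin (x 1) g) ∂(gv _) + ∫ g, lse (lin (x (-1)) g) ∂(gv _) := by
    rw [← integral_const_mul, ← integral_add (integrable_lse_lin _) (integrable_lse_lin _)]
    refine integral_mono ((integrable_lse_lin _).const_mul _)
      ((integrable_lse_lin _).add (integrable_lse_lin _)) fun g => ?_
    refine (lse_midpoint _ (fun i => (‖WithLp.toLp 2 (a i)‖ * ‖WithLp.toLp 2 (b i)‖)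
      * g (Sum.inl (Sum.inr ())))).trans (le_of_eq ?_)
    congr 2 <;> ext i <;> simp [lin, x, Fintype.sum_sum_type, sub_eq_add_neg]
  have := key 1 (by norm_num)
  have := key (-1) (by norm_num)
  linarith

end Chevet

section Chevet2
open scoped Matrix.Norms.L2Operator

variable {ι κ μ : Type*} [Fintype ι] [Fintype κ] [Fintype μ]

lemma opnorm_le (M : Matrix ι κ ℝ) (c : ℝ) (hc : 0 ≤ c)
    (h : ∀ x : κ → ℝ, ‖WithLp.toLp 2 (M *ᵥ x)‖ ≤ c * ‖WithLp.toLp 2 x‖) : ‖M‖ ≤ c := by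
  rw [Matrix.l2_opNorm_def]
  refine ContinuousLinearMap.opNorm_le_bound _ hc fun x => ?_
  exact h x.ofLp

lemma mulVec_le (M : Matrix ι κ ℝ) (x : κ → ℝ) :
    ‖WithLp.toLp 2 (M *ᵥ x)‖ ≤ ‖M‖ * ‖WithLp.toLp 2 x‖ :=
  Matrix.l2_opNorm_mulVec M (WithLp.toLp 2 x)

lemma euc_sub (v w : ι → ℝ) :
    ‖WithLp.toLp 2 (v - w)‖ = dist (WithLp.toLp 2 v : EuclideanSpace ℝ ι) (WithLp.toLp 2 w) := by
  rw [dist_eq_norm]; rfl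

/-- net bound on operator norm -/
lemma opnorm_net (M : Matrix ι κ ℝ) (ε : ℝ) (hε : 0 ≤ ε) (t : Set (EuclideanSpace ℝ ι))
    (t' : Set (EuclideanSpace ℝ κ)) (ht' : ∀ v ∈ t', ‖v‖ ≤ 1)
    (h1 : ∀ u : EuclideanSpace ℝ ι, ‖u‖ ≤ 1 → ∃ w ∈ t, dist u w ≤ ε)
    (h2 : ∀ u : EuclideanSpace ℝ κ, ‖u‖ ≤ 1 → ∃ w ∈ t', dist u w ≤ ε)
    (c : ℝ) (hc : ∀ u ∈ t, ∀ v ∈ t', u.ofLp ⬝ᵥ (M *ᵥ v.ofLp) ≤ c) :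
    ‖M‖ ≤ c + 2 * ε * ‖M‖ := by
  have bil : ∀ u : EuclideanSpace ℝ ι, ∀ v : EuclideanSpace ℝ κ,
      u.ofLp ⬝ᵥ (M *ᵥ v.ofLp) ≤ ‖u‖ * (‖M‖ * ‖v‖) := fun u v =>
    (dot_le _ _).trans (mul_le_mul_of_nonneg_left (mulVec_le M _) (norm_nonneg _))
  have key : ∀ u : EuclideanSpace ℝ ι, ∀ v : EuclideanSpace ℝ κ, ‖u‖ ≤ 1 → ‖v‖ ≤ 1 →
      u.ofLp ⬝ᵥ (M *ᵥ v.ofLp) ≤ c + 2 * ε * ‖M‖ := by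
    intro u v hu hv
    obtain ⟨u', hu', hd⟩ := h1 u hu
    obtain ⟨v', hv', hd'⟩ := h2 v hv
    have e : u.ofLp ⬝ᵥ (M *ᵥ v.ofLp) = u'.ofLp ⬝ᵥ (M *ᵥ v'.ofLp)
        + (u - u').ofLp ⬝ᵥ (M *ᵥ v'.ofLp) + u.ofLp ⬝ᵥ (M *ᵥ (v - v').ofLp) := by
      simp only [WithLp.ofLp_sub, Matrix.mulVec_sub, sub_dotProduct, dotProduct_sub]; ring
    rw [dist_eq_norm] at hd hd'
    have b1 := (bil (u - u') v').trans (mul_le_mul hd (mul_le_mul_of_nonneg_left (ht' v' hv')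
      (norm_nonneg M)) (by positivity) hε)
    have b2 := (bil u (v - v')).trans (mul_le_mul hu (mul_le_mul_of_nonneg_left hd'
      (norm_nonneg M)) (by positivity) zero_le_one)
    have := hc u' hu' v' hv'
    rw [e]; linarith
  have hc0 : 0 ≤ c + 2 * ε * ‖M‖ := by simpa using key 0 0 (by simp) (by simp)
  refine opnorm_le M _ hc0 fun x => ?_
  by_cases hx : ‖WithLp.toLp 2 x‖ = 0
  · have := mulVec_le M x
    rw [hx] at this ⊢; simpa using this
  by_cases hy : ‖WithLp.toLp 2 (M *ᵥ x)‖ = 0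
  · rw [hy]; positivity
  set X : EuclideanSpace ℝ κ := WithLp.toLp 2 x
  set Y : EuclideanSpace ℝ ι := WithLp.toLp 2 (M *ᵥ x)
  have := key (‖Y‖⁻¹ • Y) (‖X‖⁻¹ • X) (by rw [norm_smul]; simp [hy]) (by rw [norm_smul]; simp [hx])
  simp only [WithLp.ofLp_smul, smul_dotProduct, Matrix.mulVec_smul, dotProduct_smul, smul_eq_mul] at this
  have e : Y.ofLp ⬝ᵥ (M *ᵥ X.ofLp) = ‖Y‖ ^ 2 := (norm_toLp_sq _).symm
  rw [e] at this
  have hX : 0 < ‖X‖ := lt_of_le_of_ne (norm_nonneg _) (Ne.symm hx)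
  calc ‖Y‖ = (‖X‖⁻¹ * (‖Y‖⁻¹ * ‖Y‖ ^ 2)) * ‖X‖ := by field_simp
    _ ≤ _ := mul_le_mul_of_nonneg_right this (norm_nonneg _)

lemma exists_net (ε : ℝ) (hε : 0 < ε) : ∃ t : Finset (EuclideanSpace ℝ ι), t.Nonempty ∧
    (∀ v ∈ t, ‖v‖ ≤ 1) ∧ ∀ u : EuclideanSpace ℝ ι, ‖u‖ ≤ 1 → ∃ w ∈ t, dist u w ≤ ε := by
  obtain ⟨t, ht, hf, hc⟩ := Metric.finite_approx_of_totallyBounded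
    (isCompact_closedBall (0 : EuclideanSpace ℝ ι) 1).totallyBounded ε hε
  have hcov : ∀ u : EuclideanSpace ℝ ι, ‖u‖ ≤ 1 → ∃ w ∈ hf.toFinset, dist u w ≤ ε := by
    intro u hu
    have := hc (show u ∈ Metric.closedBall 0 1 by simpa using hu)
    simp only [Set.mem_iUnion, Metric.mem_ball] at this
    obtain ⟨w, hw, hd⟩ := this
    exact ⟨w, by simpa using hw, hd.le⟩
  refine ⟨hf.toFinset, ?_, ?_, hcov⟩
  · obtain ⟨w, hw, _⟩ := hcov 0 (by simp)
    exact ⟨w, hw⟩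
  · intro v hv
    simpa using ht (by simpa using hv)

/-- Frobenius norm -/
noncomputable def frob (T : Matrix κ μ ℝ) : ℝ := √(∑ i, ∑ j, T i j ^ 2)

lemma int_coord_mul (i j : ι) : Integrable (fun g : ι → ℝ => g i * g j) (gv ι) := by
  have h : ∀ i : ι, MemLp (fun g : ι → ℝ => g i) 2 (gv ι) := fun i =>
    (memLp_id_gaussianReal 2).comp_measurePreserving
      (measurePreserving_eval (fun _ : ι => gaussianReal 0 1) i)
  exact MemLp.integrable_mul (h i) (h j)

lemma integral_coord_sq (i : ι) : ∫ g, g i * g i ∂(gv ι) = 1 := by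
  have := stein_pi (ι := ι) i (fun g => g i) (fun _ => 1) (fun g s => by
    simpa using hasDerivAt_id' s) (integrable_coord i) (int_coord_mul i i) (integrable_const _)
  simpa using this

lemma integral_coord_ne (i j : ι) (h : i ≠ j) : ∫ g, g i * g j ∂(gv ι) = 0 := by
  have := stein_pi (ι := ι) i (fun g => g j) (fun _ => 0) (fun g s => by
    simpa [Function.update_of_ne h.symm] using hasDerivAt_const s (g j)) (integrable_coord j)
      (int_coord_mul i j) (integrable_const _)
  simpa using this

lemma integrable_euc (M : Matrix κ ι ℝ) :
    Integrable (fun g : ι → ℝ => ‖WithLp.toLp 2 (M *ᵥ g)‖) (gv ι) := by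
  have hb : Integrable (fun g : ι → ℝ => ‖M‖ * ∑ i, |g i|) (gv ι) :=
    (integrable_finsetSum _ fun i _ => (integrable_coord i).abs).const_mul _
  refine hb.mono' ?_ (Filter.Eventually.of_forall fun g => ?_)
  · apply Continuous.aestronglyMeasurable; fun_prop
  · rw [norm_norm]
    refine (mulVec_le M g).trans (mul_le_mul_of_nonneg_left ?_ (norm_nonneg _))
    rw [EuclideanSpace.norm_eq]
    refine Real.sqrt_le_iff.2 ⟨Finset.sum_nonneg fun i _ => abs_nonneg _, ?_⟩
    simp only [Real.norm_eq_abs]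
    exact Finset.sum_sq_le_sq_sum_of_nonneg fun i _ => abs_nonneg _

lemma integral_euc_le (M : Matrix κ ι ℝ) :
    ∫ g, ‖WithLp.toLp 2 (M *ᵥ g)‖ ∂(gv ι) ≤ frob M := by
  have e : ∀ g : ι → ℝ, ‖WithLp.toLp 2 (M *ᵥ g)‖ ^ 2
      = ∑ p, ∑ i, ∑ j, M p i * M p j * (g i * g j) := by
    intro g
    rw [norm_toLp_sq, dotProduct]
    refine Finset.sum_congr rfl fun p _ => ?_
    simp only [Matrix.mulVec, dotProduct, Finset.sum_mul_sum]
    refine Finset.sum_congr rfl fun i _ => Finset.sum_congr rfl fun j _ => by ring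
  have hi : Integrable (fun g : ι → ℝ => ‖WithLp.toLp 2 (M *ᵥ g)‖ ^ 2) (gv ι) := by
    simp_rw [e]
    exact integrable_finsetSum _ fun p _ => integrable_finsetSum _ fun i _ =>
      integrable_finsetSum _ fun j _ => (int_coord_mul i j).const_mul _
  have h2 : ∫ g, ‖WithLp.toLp 2 (M *ᵥ g)‖ ^ 2 ∂(gv ι) = ∑ p, ∑ i, M p i ^ 2 := by
    simp_rw [e]
    rw [integral_finsetSum _ fun p _ => integrable_finsetSum _ fun i _ =>
      integrable_finsetSum _ fun j _ => (int_coord_mul i j).const_mul _]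
    refine Finset.sum_congr rfl fun p _ => ?_
    rw [integral_finsetSum _ fun i _ =>
      integrable_finsetSum _ fun j _ => (int_coord_mul i j).const_mul _]
    refine Finset.sum_congr rfl fun i _ => ?_
    rw [integral_finsetSum _ fun j _ => (int_coord_mul i j).const_mul _,
      Finset.sum_eq_single i]
    · rw [integral_const_mul, integral_coord_sq]; ring
    · intro j _ hj
      rw [integral_const_mul, integral_coord_ne _ _ hj.symm, mul_zero]
    · simp
  unfold frob
  refine Real.le_sqrt_of_sq_le ?_
  rw [← h2]
  set m := ∫ g, ‖WithLp.toLp 2 (M *ᵥ g)‖ ∂(gv ι)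
  have h3 : 0 ≤ ∫ g, (‖WithLp.toLp 2 (M *ᵥ g)‖ - m) ^ 2 ∂(gv ι) :=
    integral_nonneg fun g => sq_nonneg _
  have h4 : ∫ g, (‖WithLp.toLp 2 (M *ᵥ g)‖ - m) ^ 2 ∂(gv ι)
      = ∫ g, ‖WithLp.toLp 2 (M *ᵥ g)‖ ^ 2 ∂(gv ι) - m ^ 2 := by
    have : ∀ g, (‖WithLp.toLp 2 (M *ᵥ g)‖ - m) ^ 2 = ‖WithLp.toLp 2 (M *ᵥ g)‖ ^ 2
      - 2 * m * ‖WithLp.toLp 2 (M *ᵥ g)‖ + m ^ 2 := fun g => by ring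
    simp_rw [this]
    have hi3 : Integrable (fun g : ι → ℝ => ‖WithLp.toLp 2 (M *ᵥ g)‖ ^ 2
      - 2 * m * ‖WithLp.toLp 2 (M *ᵥ g)‖) (gv ι) := hi.sub ((integrable_euc M).const_mul _)
    rw [integral_add hi3 (integrable_const _),
      integral_sub hi ((integrable_euc M).const_mul _), integral_const_mul]
    simp; ring
  linarith

end Chevet2

section Chevet3
open scoped Matrix.Norms.L2Operator

variable {ι κ μ : Type*} [Fintype ι] [Fintype κ] [Fintype μ]

lemma le_of_eps (x y c : ℝ) (h : ∀ ε : ℝ, 0 < ε → x ≤ y + ε * c) : x ≤ y := by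
  have h1 : Filter.Tendsto (fun ε : ℝ => y + ε * c) (nhdsWithin 0 (Set.Ioi 0)) (nhds (y + 0 * c)) :=
    (Continuous.tendsto (by fun_prop) 0).mono_left nhdsWithin_le_nhds
  rw [zero_mul, add_zero] at h1
  exact ge_of_tendsto h1 (Filter.eventually_of_mem self_mem_nhdsWithin fun ε hε => h ε hε)

/-- matrix from flattened entries -/
def unc (G : ι × κ → ℝ) : Matrix ι κ ℝ := Matrix.of fun i j => G (i, j)

lemma chevet_aux (s : ι → ℝ) (σ : ℝ) (hσ0 : 0 ≤ σ) (hσ : ∀ i, |s i| ≤ σ) (T : Matrix κ μ ℝ)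
    (ε : ℝ) (hε : 0 < ε) :
    ∃ c : ℝ, ∀ β : ℝ, 0 < β → ∃ (L : (ι × κ → ℝ) → ℝ), Integrable L (gv (ι × κ)) ∧
      (∀ G, ‖diagonal s * unc G * T‖ ≤ L G / β + 2 * ε * ‖diagonal s * unc G * T‖) ∧
      ∫ G, L G ∂(gv (ι × κ)) ≤ β * (σ * frob T + √(∑ i, s i ^ 2) * ‖T‖) + c := by
  obtain ⟨t, htn, ht1, ht⟩ := exists_net (ι := ι) ε hε
  obtain ⟨t', htn', ht1', ht'⟩ := exists_net (ι := μ) ε hε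
  haveI : Nonempty (↥t × ↥t') := ⟨⟨htn.choose, htn.choose_spec⟩, ⟨htn'.choose, htn'.choose_spec⟩⟩
  refine ⟨Real.log (Fintype.card (↥t × ↥t')), fun β hβ => ?_⟩
  let a : ↥t × ↥t' → ι → ℝ := fun w p => β * (s p * w.1.1.ofLp p)
  let b : ↥t × ↥t' → κ → ℝ := fun w => T *ᵥ w.2.1.ofLp
  refine ⟨fun G => lse (fun i => ∑ p, a i p.1 * b i p.2 * G p), ?_, ?_, ?_⟩
  · exact integrable_lse_lin (fun i (p : ι × κ) => a i p.1 * b i p.2)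
  · intro G
    refine opnorm_net _ ε hε.le (t : Set _) (t' : Set _) (fun v hv => ht1' v hv) ht ht' _ ?_
    intro u hu v hv
    have := le_lse (fun i => ∑ p, a i p.1 * b i p.2 * G p) (⟨u, hu⟩, ⟨v, hv⟩)
    rw [le_div_iff₀ hβ]
    refine le_trans (le_of_eq ?_) this
    rw [← Matrix.mulVec_mulVec, ← Matrix.mulVec_mulVec]
    simp only [a, b, Fintype.sum_prod_type, dotProduct, Matrix.mulVec_diagonal, Finset.sum_mul]
    refine Finset.sum_congr rfl fun p _ => ?_
    set w := T *ᵥ v.ofLp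
    simp only [unc, Matrix.mulVec, dotProduct, Matrix.of_apply, Finset.mul_sum, Finset.sum_mul]
    refine Finset.sum_congr rfl fun q _ => ?_
    ring
  · refine (chevet_lse a b).trans ?_
    have ha : ∀ w, ‖WithLp.toLp 2 (a w)‖ ≤ β * σ := by
      intro w
      have : WithLp.toLp 2 (a w) = β • WithLp.toLp 2 (diagonal s *ᵥ w.1.1.ofLp) := by
        ext p; simp [a, Matrix.mulVec_diagonal]
      rw [this, norm_smul, Real.norm_eq_abs, abs_of_pos hβ]
      refine mul_le_mul_of_nonneg_left ((mulVec_le _ _).trans ?_) hβ.le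
      rw [Matrix.l2_opNorm_diagonal]
      refine (mul_le_of_le_one_right (norm_nonneg _) (ht1 _ w.1.2)).trans ?_
      exact (pi_norm_le_iff_of_nonneg hσ0).2 hσ
    have hb : ∀ w, ‖WithLp.toLp 2 (b w)‖ ≤ ‖T‖ := fun w =>
      (mulVec_le _ _).trans (mul_le_of_le_one_right (norm_nonneg _) (ht1' _ w.2.2))
    have hga : ∀ w (g : ι → ℝ), ∑ p, a w p * g p ≤ β * ‖WithLp.toLp 2 (diagonal s *ᵥ g)‖ := by
      intro w g
      have : ∑ p, a w p * g p = β * (w.1.1.ofLp ⬝ᵥ (diagonal s *ᵥ g)) := by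
        simp only [dotProduct, Matrix.mulVec_diagonal, Finset.mul_sum, a]
        refine Finset.sum_congr rfl fun q _ => by ring
      rw [this]
      refine mul_le_mul_of_nonneg_left ((dot_le _ _).trans ?_) hβ.le
      exact mul_le_of_le_one_left (norm_nonneg _) (ht1 _ w.1.2)
    have hgb : ∀ w (g : κ → ℝ), ∑ p, b w p * g p ≤ ‖WithLp.toLp 2 (Tᵀ *ᵥ g)‖ := by
      intro w g
      have : ∑ p, b w p * g p = w.2.1.ofLp ⬝ᵥ (Tᵀ *ᵥ g) := by
        rw [Matrix.dotProduct_mulVec, Matrix.vecMul_transpose]; rfl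
      rw [this]
      exact (dot_le _ _).trans (mul_le_of_le_one_left (norm_nonneg _) (ht1' _ w.2.2))
    have i1 : Integrable (fun g : ι ⊕ κ → ℝ =>
        ‖WithLp.toLp 2 (diagonal s *ᵥ fun i => g (Sum.inl i))‖) (gv (ι ⊕ κ)) :=
      (pi_comp_mp (gaussianReal 0 1) (Sum.inl : ι → ι ⊕ κ)
        Sum.inl_injective).integrable_comp_of_integrable (integrable_euc (diagonal s))
    have i2 : Integrable (fun g : ι ⊕ κ → ℝ =>
        ‖WithLp.toLp 2 (Tᵀ *ᵥ fun i => g (Sum.inr i))‖) (gv (ι ⊕ κ)) :=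
      (pi_comp_mp (gaussianReal 0 1) (Sum.inr : κ → ι ⊕ κ)
        Sum.inr_injective).integrable_comp_of_integrable (integrable_euc Tᵀ)
    have i3 : Integrable (fun g : ι ⊕ κ → ℝ =>
        ‖T‖ * (β * ‖WithLp.toLp 2 (diagonal s *ᵥ fun i => g (Sum.inl i))‖)) (gv (ι ⊕ κ)) :=
      (i1.const_mul _).const_mul _
    have i4 : Integrable (fun g : ι ⊕ κ → ℝ =>
        β * σ * ‖WithLp.toLp 2 (Tᵀ *ᵥ fun i => g (Sum.inr i))‖) (gv (ι ⊕ κ)) :=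
      i2.const_mul _
    have i5 : Integrable (fun g : ι ⊕ κ → ℝ =>
        ‖T‖ * (β * ‖WithLp.toLp 2 (diagonal s *ᵥ fun i => g (Sum.inl i))‖) +
        β * σ * ‖WithLp.toLp 2 (Tᵀ *ᵥ fun i => g (Sum.inr i))‖) (gv (ι ⊕ κ)) := i3.add i4
    have step : ∫ g, lse (fun i => ‖WithLp.toLp 2 (b i)‖ * (∑ p, a i p * g (Sum.inl p))
      + ‖WithLp.toLp 2 (a i)‖ * (∑ q, b i q * g (Sum.inr q))) ∂(gv (ι ⊕ κ)) ≤
      ∫ g : ι ⊕ κ → ℝ, (‖T‖ * (β * ‖WithLp.toLp 2 (diagonal s *ᵥ fun i => g (Sum.inl i))‖) +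
        β * σ * ‖WithLp.toLp 2 (Tᵀ *ᵥ fun i => g (Sum.inr i))‖
          + Real.log (Fintype.card (↥t × ↥t'))) ∂(gv (ι ⊕ κ)) := by
      refine integral_mono ?_ (i5.add (integrable_const _)) ?_
      · have := integrable_lse_lin (fun w (x : ι ⊕ κ) =>
          (Sum.elim (fun p => ‖WithLp.toLp 2 (b w)‖ * a w p) (fun q => ‖WithLp.toLp 2 (a w)‖ * b w q) x : ℝ))
        convert this using 3 with g
        funext w
        simp [lin, Fintype.sum_sum_type, Finset.mul_sum, mul_assoc]
      · intro g
        refine lse_le _ _ fun w => ?_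
        refine add_le_add ?_ ?_
        · refine (mul_le_mul_of_nonneg_left (hga w _) (norm_nonneg _)).trans ?_
          exact mul_le_mul_of_nonneg_right (hb w) (by positivity)
        · refine (mul_le_mul_of_nonneg_left (hgb w _) (norm_nonneg _)).trans ?_
          exact mul_le_mul_of_nonneg_right (ha w) (by positivity)
    refine step.trans ?_
    rw [integral_add i5 (integrable_const _), integral_add i3 i4, integral_const_mul,
      integral_const_mul, integral_const_mul]
    have e1 := integral_gv_comp (Sum.inl : ι → ι ⊕ κ) Sum.inl_injective
      (fun g => ‖WithLp.toLp 2 (diagonal s *ᵥ g)‖) (by fun_prop)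
    have e2 := integral_gv_comp (Sum.inr : κ → ι ⊕ κ) Sum.inr_injective
      (fun g => ‖WithLp.toLp 2 (Tᵀ *ᵥ g)‖) (by fun_prop)
    rw [← e1, ← e2]
    have b1 := integral_euc_le (diagonal s)
    have b2 := integral_euc_le Tᵀ
    have f1 : frob (diagonal s) = √(∑ i, s i ^ 2) := by
      unfold frob
      congr 1
      refine Finset.sum_congr rfl fun i _ => ?_
      rw [Finset.sum_eq_single i] <;> simp +contextual [diagonal_apply, eq_comm]
    have f2 : frob Tᵀ = frob T := by
      unfold frob; rw [Finset.sum_comm]; rfl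
    rw [f1] at b1
    rw [f2] at b2
    have c1 := mul_le_mul_of_nonneg_left b1 (show 0 ≤ ‖T‖ * β by positivity)
    have c2 := mul_le_mul_of_nonneg_left b2 (show 0 ≤ β * σ by positivity)
    simp only [integral_const, probReal_univ, one_smul]
    linarith

lemma chevet (s : ι → ℝ) (σ : ℝ) (hσ0 : 0 ≤ σ) (hσ : ∀ i, |s i| ≤ σ) (T : Matrix κ μ ℝ) :
    ∫⁻ G, ENNReal.ofReal ‖diagonal s * Matrix.of G * T‖ ∂(gm ι κ) ≤
      ENNReal.ofReal (σ * frob T + √(∑ i, s i ^ 2) * ‖T‖) := by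
  set B := σ * frob T + √(∑ i, s i ^ 2) * ‖T‖
  have hcont : Continuous (fun G : ι × κ → ℝ => ‖diagonal s * unc G * T‖) := by
    unfold unc; fun_prop
  have hintg : Integrable (fun G : ι × κ → ℝ => ‖diagonal s * unc G * T‖) (gv (ι × κ)) := by
    obtain ⟨c, h⟩ := chevet_aux s σ hσ0 hσ T (1/4) (by norm_num)
    obtain ⟨L, h1, h2, -⟩ := h 1 one_pos
    refine (h1.const_mul 2).mono' hcont.aestronglyMeasurable (Filter.Eventually.of_forall fun G => ?_)
    have := h2 G
    rw [norm_norm]; linarith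
  have main : ∫ G, ‖diagonal s * unc G * T‖ ∂(gv (ι × κ)) ≤ B := by
    set I := ∫ G, ‖diagonal s * unc G * T‖ ∂(gv (ι × κ))
    refine le_of_eps _ _ (2 * I) fun ε hε => ?_
    obtain ⟨c, h⟩ := chevet_aux s σ hσ0 hσ T ε hε
    refine le_of_eps _ _ c fun δ hδ => ?_
    obtain ⟨L, h1, h2, h3⟩ := h δ⁻¹ (inv_pos.2 hδ)
    have : I ≤ ∫ G, (δ * L G + 2 * ε * ‖diagonal s * unc G * T‖) ∂(gv (ι × κ)) := by
      refine integral_mono hintg ((h1.const_mul _).add (hintg.const_mul _)) fun G => ?_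
      have := h2 G
      rwa [div_inv_eq_mul, mul_comm] at this
    rw [integral_add (h1.const_mul _) (hintg.const_mul _), integral_const_mul,
      integral_const_mul] at this
    have h4 := mul_le_mul_of_nonneg_left h3 hδ.le
    rw [mul_add, ← mul_assoc, mul_inv_cancel₀ hδ.ne', one_mul] at h4
    change _ ≤ B + _ at h4
    change I ≤ _ + 2 * ε * I at this
    linarith
  have e : ∫⁻ G, ENNReal.ofReal ‖diagonal s * Matrix.of G * T‖ ∂(gm ι κ)
      = ∫⁻ G, ENNReal.ofReal ‖diagonal s * unc G * T‖ ∂(gv (ι × κ)) := by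
    rw [← uncurry_mp.map_eq, lintegral_map hcont.measurable.ennreal_ofReal uncurry_mp.measurable]
    rfl
  rw [e, ← ofReal_integral_eq_lintegral_ofReal hintg (Filter.Eventually.of_forall fun G => norm_nonneg _)]
  exact ENNReal.ofReal_le_ofReal main
end Chevet3

section Wish
open scoped Matrix.Norms.L2Operator

variable {ι κ μ : Type*} [Fintype ι] [Fintype κ]

lemma hasDerivAt_matInv (A : ℝ → Matrix ι ι ℝ) (A' : Matrix ι ι ℝ) (t : ℝ)
    (h : ∀ i j, HasDerivAt (fun s => A s i j) (A' i j) t) (hu : IsUnit (A t)) (i j : ι) :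
    HasDerivAt (fun s => (A s)⁻¹ i j) (- ((A t)⁻¹ * A' * (A t)⁻¹) i j) t := by
  have hA : HasDerivAt A A' t := hasDerivAt_pi.2 fun i => hasDerivAt_pi.2 fun j => h i j
  obtain ⟨u, hu⟩ := hu
  have h1 := (hasFDerivAt_ringInverse (𝕜 := ℝ) u)
  rw [hu] at h1
  have h2 : HasDerivAt (fun s => (A s)⁻¹) (- ((A t)⁻¹ * A' * (A t)⁻¹)) t := by
    have := h1.comp_hasDerivAt t hA
    simp_rw [Matrix.nonsing_inv_eq_ringInverse]
    refine this.congr_deriv ?_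
    rw [← hu]
    simp
  exact hasDerivAt_pi.1 (hasDerivAt_pi.1 h2 i) j

lemma single_mulVec' (a : ι) (b : κ) (v : κ → ℝ) :
    Matrix.single a b (1:ℝ) *ᵥ v = Pi.single a (v b) := by
  ext i
  simp only [Matrix.mulVec, dotProduct, Matrix.single_apply, Pi.single_apply]
  by_cases h : i = a
  · simp [h]
  · simp [h, Ne.symm h]

lemma deriv_alg (W : Matrix ι ι ℝ) (M : Matrix ι κ ℝ) (h : ι → ℝ) (a : ι) (b : κ) (j : ι) :
    ((W * (Matrix.single a b (1:ℝ) * Mᵀ + M * (Matrix.single a b (1:ℝ))ᵀ) * W) *ᵥ h) j =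
      W j a * (Mᵀ *ᵥ (W *ᵥ h)) b + (W * M) j b * (W *ᵥ h) a := by
  rw [← Matrix.mulVec_mulVec, ← Matrix.mulVec_mulVec, Matrix.add_mulVec, Matrix.mulVec_add,
    ← Matrix.mulVec_mulVec, ← Matrix.mulVec_mulVec, single_mulVec', Matrix.transpose_single,
    single_mulVec', Matrix.mulVec_mulVec (v := Pi.single b _)]
  simp [Matrix.mulVec_single, mul_comm]

/-- regularized Gram matrix -/
noncomputable def gram (ε : ℝ) (M : Matrix ι κ ℝ) : Matrix ι ι ℝ := M * Mᵀ + ε • 1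

/-- regularized inverse Wishart matrix -/
noncomputable def Wm (ε : ℝ) (M : Matrix ι κ ℝ) : Matrix ι ι ℝ := (gram ε M)⁻¹

variable {ε : ℝ}

lemma gram_posDef (hε : 0 < ε) (M : Matrix ι κ ℝ) : (gram ε M).PosDef := by
  unfold gram
  have h1 : (M * Mᵀ).PosSemidef := by
    simpa using Matrix.posSemidef_self_mul_conjTranspose M
  have h2 : (ε • (1 : Matrix ι ι ℝ)).PosDef := Matrix.PosDef.smul Matrix.PosDef.one hε
  exact Matrix.PosDef.posSemidef_add h1 h2

lemma gram_isUnit (hε : 0 < ε) (M : Matrix ι κ ℝ) : IsUnit (gram ε M) := (gram_posDef hε M).isUnit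

lemma Wm_posDef (hε : 0 < ε) (M : Matrix ι κ ℝ) : (Wm ε M).PosDef := (gram_posDef hε M).inv

lemma Wm_symm (hε : 0 < ε) (M : Matrix ι κ ℝ) : (Wm ε M)ᵀ = Wm ε M := by
  simpa using (Wm_posDef hε M).isHermitian.eq

lemma gram_mul_Wm (hε : 0 < ε) (M : Matrix ι κ ℝ) : gram ε M * Wm ε M = 1 :=
  Matrix.mul_nonsing_inv _ ((Matrix.isUnit_iff_isUnit_det _).1 (gram_isUnit hε M))

lemma Wm_mul_gram (hε : 0 < ε) (M : Matrix ι κ ℝ) : Wm ε M * gram ε M = 1 :=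
  Matrix.nonsing_inv_mul _ ((Matrix.isUnit_iff_isUnit_det _).1 (gram_isUnit hε M))

lemma mmt_Wm (hε : 0 < ε) (M : Matrix ι κ ℝ) : M * Mᵀ * Wm ε M = 1 - ε • Wm ε M := by
  have := gram_mul_Wm hε M
  unfold gram at this
  rw [add_mul, Matrix.smul_mul, one_mul] at this
  rw [← this]; abel

lemma Wm_mmt (hε : 0 < ε) (M : Matrix ι κ ℝ) : Wm ε M * (M * Mᵀ) = 1 - ε • Wm ε M := by
  have := Wm_mul_gram hε M
  unfold gram at this
  rw [mul_add, Matrix.mul_smul, mul_one] at this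
  rw [← this]; abel

/-- the vector `W h` -/
noncomputable def wv (ε : ℝ) (M : Matrix ι κ ℝ) (h : ι → ℝ) : ι → ℝ := Wm ε M *ᵥ h
noncomputable def ph (ε : ℝ) (M : Matrix ι κ ℝ) (h : ι → ℝ) : ℝ := h ⬝ᵥ wv ε M h
noncomputable def cv (ε : ℝ) (M : Matrix ι κ ℝ) (h : ι → ℝ) : κ → ℝ := Mᵀ *ᵥ wv ε M h

lemma ph_nonneg (hε : 0 < ε) (M : Matrix ι κ ℝ) (h : ι → ℝ) : 0 ≤ ph ε M h := by
  have := (Wm_posDef hε M).posSemidef.dotProduct_mulVec_nonneg h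
  simpa [ph, wv] using this

lemma cv_sq (hε : 0 < ε) (M : Matrix ι κ ℝ) (h : ι → ℝ) : cv ε M h ⬝ᵥ cv ε M h = ph ε M h - ε * (wv ε M h ⬝ᵥ wv ε M h) := by
  unfold cv
  rw [Matrix.dotProduct_mulVec, Matrix.vecMul_transpose, Matrix.mulVec_mulVec,
    show (M * Mᵀ) *ᵥ wv ε M h = h - ε • wv ε M h by
      unfold wv; rw [Matrix.mulVec_mulVec, mmt_Wm hε, Matrix.sub_mulVec, Matrix.one_mulVec,
        Matrix.smul_mulVec]]
  rw [sub_dotProduct, smul_dotProduct, smul_eq_mul]; rfl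

lemma cv_sq_le (hε : 0 < ε) (M : Matrix ι κ ℝ) (h : ι → ℝ) : cv ε M h ⬝ᵥ cv ε M h ≤ ph ε M h := by
  rw [cv_sq hε]
  have : 0 ≤ wv ε M h ⬝ᵥ wv ε M h := by rw [← norm_toLp_sq]; positivity
  nlinarith

lemma wv_sq_le (hε : 0 < ε) (M : Matrix ι κ ℝ) (h : ι → ℝ) : ε * (wv ε M h ⬝ᵥ wv ε M h) ≤ ph ε M h := by
  have h1 := cv_sq hε M h
  have : 0 ≤ cv ε M h ⬝ᵥ cv ε M h := by rw [← norm_toLp_sq]; positivity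
  linarith

lemma wv_norm_le (hε : 0 < ε) (M : Matrix ι κ ℝ) (h : ι → ℝ) : ‖WithLp.toLp 2 (wv ε M h)‖ ≤ ε⁻¹ * ‖WithLp.toLp 2 h‖ := by
  have h1 := wv_sq_le hε M h
  rw [← norm_toLp_sq] at h1
  have h2 : ph ε M h ≤ _ := dot_le _ _
  set a := ‖WithLp.toLp 2 (wv ε M h)‖
  have ha : 0 ≤ a := norm_nonneg _
  rw [inv_mul_eq_div, le_div_iff₀ hε]
  rcases ha.eq_or_lt with h0 | h0
  · rw [← h0]; simp
  · refine le_of_mul_le_mul_right ?_ h0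
    calc a * ε * a = ε * a ^ 2 := by ring
      _ ≤ _ := h1.trans h2

lemma Wm_norm_le (hε : 0 < ε) (M : Matrix ι κ ℝ) : ‖Wm ε M‖ ≤ ε⁻¹ :=
  opnorm_le _ _ (by positivity) fun x => wv_norm_le hε M x

lemma ph_le (hε : 0 < ε) (M : Matrix ι κ ℝ) (h : ι → ℝ) : ph ε M h ≤ ε⁻¹ * (h ⬝ᵥ h) := by
  refine (dot_le _ _).trans ?_
  refine (mul_le_mul_of_nonneg_left (wv_norm_le hε M h) (norm_nonneg _)).trans (le_of_eq ?_)
  rw [← norm_toLp_sq]; ring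

lemma trZ (hε : 0 < ε) (M : Matrix ι κ ℝ) : (Mᵀ * Wm ε M * M).trace = Fintype.card ι - ε * (Wm ε M).trace := by
  rw [Matrix.trace_mul_comm, ← Matrix.mul_assoc, mmt_Wm hε]
  simp

lemma trZ_le (hε : 0 < ε) (M : Matrix ι κ ℝ) : (Mᵀ * Wm ε M * M).trace ≤ Fintype.card ι := by
  rw [trZ hε]
  have : 0 ≤ (Wm ε M).trace := (Wm_posDef hε M).posSemidef.trace_nonneg
  nlinarith

lemma Z_nonneg (hε : 0 < ε) (M : Matrix ι κ ℝ) (b : κ) : 0 ≤ (Mᵀ * Wm ε M * M) b b := by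
  have : (Mᵀ * Wm ε M * M).PosSemidef := by
    simpa using (Wm_posDef hε M).posSemidef.conjTranspose_mul_mul_same M
  exact this.diag_nonneg

lemma Z_le (hε : 0 < ε) (M : Matrix ι κ ℝ) (b : κ) : (Mᵀ * Wm ε M * M) b b ≤ Fintype.card ι := by
  refine le_trans ?_ (trZ_le hε M)
  exact Finset.single_le_sum (f := fun b => (Mᵀ * Wm ε M * M) b b) (fun i _ => Z_nonneg hε M i)
    (Finset.mem_univ b)

lemma Wm_swap (hε : 0 < ε) (M : Matrix ι κ ℝ) (i j : ι) : Wm ε M i j = Wm ε M j i := by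
  conv_lhs => rw [← Wm_symm hε M]
  rfl

lemma cv_apply (hε : 0 < ε) (M : Matrix ι κ ℝ) (h : ι → ℝ) (b : κ) : cv ε M h b = ∑ a, h a * (Wm ε M * M) a b := by
  unfold cv wv
  simp only [Matrix.mulVec, dotProduct, Matrix.mul_apply, Matrix.transpose_apply, Finset.mul_sum]
  rw [Finset.sum_comm]
  refine Finset.sum_congr rfl fun i _ => Finset.sum_congr rfl fun j _ => ?_
  rw [Wm_swap hε M i j]; ring

lemma U_bound (hε : 0 < ε) (M : Matrix ι κ ℝ) (a : ι) (b : κ) : |(Wm ε M * M) a b| ≤ 1 + ε⁻¹ := by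
  have h := cv_sq_le hε M (Pi.single a 1)
  have h2 := ph_le hε M (Pi.single a 1)
  have e : cv ε M (Pi.single a 1) b = (Wm ε M * M) a b := by
    rw [cv_apply hε]; simp [Pi.single_apply]
  have : ((Wm ε M * M) a b) ^ 2 ≤ ε⁻¹ := by
    rw [← e]
    refine le_trans ?_ (h.trans (h2.trans (by simp)))
    rw [sq]
    exact Finset.single_le_sum (f := fun b => cv ε M (Pi.single a 1) b * cv ε M (Pi.single a 1) b)
      (fun i _ => mul_self_nonneg _) (Finset.mem_univ b)
  have h0 : 0 < ε⁻¹ := inv_pos.2 hε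
  refine abs_le_of_sq_le_sq ?_ (by positivity)
  nlinarith


/-- derivative structure along one entry -/
lemma hasDerivAt_wv (hε : 0 < ε) (h : ι → ℝ) (G : ι × κ → ℝ) (a : ι) (b : κ) (s : ℝ) (j : ι) :
    HasDerivAt (fun s => wv ε (unc (Function.update G (a, b) s)) h j)
      (-(Wm ε (unc (Function.update G (a, b) s)) j a * cv ε (unc (Function.update G (a, b) s)) h b
        + (Wm ε (unc (Function.update G (a, b) s)) * unc (Function.update G (a, b) s)) j b
          * wv ε (unc (Function.update G (a, b) s)) h a)) s := by
  set M := fun s => (unc (Function.update G (a, b) s) : Matrix ι κ ℝ) with hM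
  have hE : ∀ i l, HasDerivAt (fun s => M s i l) (Matrix.single a b (1:ℝ) i l) s := by
    intro i l
    simp only [hM, unc, Matrix.of_apply, Matrix.single_apply, Function.update_apply, Prod.mk.injEq]
    by_cases hh : i = a ∧ l = b
    · rw [if_pos ⟨hh.1.symm, hh.2.symm⟩]
      simp only [hh, and_self, if_true]
      exact hasDerivAt_id' s
    · rw [if_neg (fun h' => hh ⟨h'.1.symm, h'.2.symm⟩)]
      simp only [hh, if_false]
      exact hasDerivAt_const _ _
  have hA : ∀ i l, HasDerivAt (fun s => gram ε (M s) i l)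
      ((Matrix.single a b (1:ℝ) * (M s)ᵀ + M s * (Matrix.single a b (1:ℝ))ᵀ) i l) s := by
    intro i l
    simp only [gram, Matrix.add_apply, Matrix.mul_apply, Matrix.transpose_apply]
    rw [← Finset.sum_add_distrib]
    exact (HasDerivAt.fun_sum fun q _ => (hE i q).mul (hE l q)).add_const _
  have hW : ∀ i l, HasDerivAt (fun s => Wm ε (M s) i l) _ s := fun i l =>
    hasDerivAt_matInv (fun s => gram ε (M s)) _ s hA (gram_isUnit hε _) i l
  have : HasDerivAt (fun s => wv ε (M s) h j) (∑ l, -((gram ε (M s))⁻¹ *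
      (Matrix.single a b (1:ℝ) * (M s)ᵀ + M s * (Matrix.single a b (1:ℝ))ᵀ) * (gram ε (M s))⁻¹) j l
        * h l) s := by
    unfold wv
    exact HasDerivAt.fun_sum fun l _ => (hW j l).mul_const _
  refine this.congr_deriv ?_
  change ∑ l, -(Wm ε (M s) * (Matrix.single a b (1:ℝ) * (M s)ᵀ +
    M s * (Matrix.single a b (1:ℝ))ᵀ) * Wm ε (M s)) j l * h l = _
  simp only [neg_mul, Finset.sum_neg_distrib]
  congr 1
  change ((Wm ε (M s) * (Matrix.single a b (1:ℝ) * (M s)ᵀ +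
    M s * (Matrix.single a b (1:ℝ))ᵀ) * Wm ε (M s)) *ᵥ h) j = _
  exact deriv_alg _ _ _ _ _ _

end Wish

section Wish2
open scoped Matrix.Norms.L2Operator

variable {ι κ μ : Type*} [Fintype ι] [Fintype κ]

variable {ε : ℝ}

lemma wv_apply' (hε : 0 < ε) (M : Matrix ι κ ℝ) (h : ι → ℝ) (a : ι) :
    ∑ j, h j * Wm ε M j a = wv ε M h a := by
  unfold wv
  simp only [Matrix.mulVec, dotProduct]
  refine Finset.sum_congr rfl fun i _ => ?_
  rw [Wm_swap hε M i a]; ring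

lemma hasDerivAt_ph (hε : 0 < ε) (h : ι → ℝ) (G : ι × κ → ℝ) (a : ι) (b : κ) (s : ℝ) :
    HasDerivAt (fun s => ph ε (unc (Function.update G (a, b) s)) h)
      (-2 * wv ε (unc (Function.update G (a, b) s)) h a *
        cv ε (unc (Function.update G (a, b) s)) h b) s := by
  have : HasDerivAt (fun s => ph ε (unc (Function.update G (a, b) s)) h) _ s :=
    HasDerivAt.fun_sum fun j _ => (hasDerivAt_wv hε h G a b s j).const_mul (h j)
  refine this.congr_deriv ?_
  set M := (unc (Function.update G (a, b) s) : Matrix ι κ ℝ)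
  simp only [mul_neg, mul_add, ← mul_assoc, Finset.sum_neg_distrib, Finset.sum_add_distrib,
    ← Finset.sum_mul]
  rw [wv_apply' hε, ← cv_apply hε]
  ring

lemma hasDerivAt_cv (hε : 0 < ε) (h : ι → ℝ) (G : ι × κ → ℝ) (a : ι) (b : κ) (s : ℝ) :
    HasDerivAt (fun s => cv ε (unc (Function.update G (a, b) s)) h b)
      (wv ε (unc (Function.update G (a, b) s)) h a
       - (Wm ε (unc (Function.update G (a, b) s)) * unc (Function.update G (a, b) s)) a b *
          cv ε (unc (Function.update G (a, b) s)) h b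
       - ((unc (Function.update G (a, b) s))ᵀ * Wm ε (unc (Function.update G (a, b) s)) *
          unc (Function.update G (a, b) s)) b b * wv ε (unc (Function.update G (a, b) s)) h a) s := by
  have hE : ∀ i, HasDerivAt (fun s => (unc (Function.update G (a, b) s))ᵀ b i)
      (if i = a then (1:ℝ) else 0) s := by
    intro i
    simp only [unc, Matrix.transpose_apply, Matrix.of_apply, Function.update_apply, Prod.mk.injEq]
    by_cases hh : i = a
    · simp only [hh, and_self, if_true]
      exact hasDerivAt_id' s
    · simp only [hh, false_and, if_false]
      exact hasDerivAt_const _ _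
  have : HasDerivAt (fun s => cv ε (unc (Function.update G (a, b) s)) h b) _ s :=
    HasDerivAt.fun_sum fun j _ => (hE j).mul (hasDerivAt_wv hε h G a b s j)
  refine this.congr_deriv ?_
  set M := (unc (Function.update G (a, b) s) : Matrix ι κ ℝ)
  have e1 : (Wm ε M * M) a b = ∑ j, Mᵀ b j * Wm ε M j a := by
    simp only [Matrix.mul_apply, Matrix.transpose_apply]
    refine Finset.sum_congr rfl fun i _ => ?_
    rw [Wm_swap hε M i a]; ring
  have e2 : (Mᵀ * Wm ε M * M) b b = ∑ j, Mᵀ b j * (Wm ε M * M) j b := by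
    rw [Matrix.mul_assoc, Matrix.mul_apply]
  rw [e1, e2]
  simp only [Finset.sum_add_distrib, mul_neg, mul_add, ← mul_assoc, Finset.sum_neg_distrib,
    ← Finset.sum_mul, ite_mul, one_mul, zero_mul, Finset.sum_ite_eq', Finset.mem_univ, if_true]
  ring

lemma continuous_Wm (hε : 0 < ε) : Continuous (fun M : Matrix ι κ ℝ => Wm ε M) := by
  unfold Wm
  have hg : Continuous (fun M : Matrix ι κ ℝ => gram ε M) := by unfold gram; fun_prop
  have : ∀ M : Matrix ι κ ℝ, (gram ε M)⁻¹ = (gram ε M).det⁻¹ • (gram ε M).adjugate := by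
    intro M
    rw [Matrix.inv_def, Ring.inverse_eq_inv']
  simp_rw [this]
  refine Continuous.smul (Continuous.inv₀ hg.matrix_det fun M => ?_) hg.matrix_adjugate
  exact ((Matrix.isUnit_iff_isUnit_det _).1 (gram_isUnit hε M)).ne_zero

lemma continuous_wv (hε : 0 < ε) : Continuous (fun x : Matrix ι κ ℝ × (ι → ℝ) => wv ε x.1 x.2) := by
  unfold wv
  exact Continuous.matrix_mulVec ((continuous_Wm hε).comp continuous_fst) continuous_snd

lemma continuous_ph (hε : 0 < ε) : Continuous (fun x : Matrix ι κ ℝ × (ι → ℝ) => ph ε x.1 x.2) := by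
  unfold ph
  exact Continuous.dotProduct continuous_snd (continuous_wv hε)

lemma continuous_cv (hε : 0 < ε) : Continuous (fun x : Matrix ι κ ℝ × (ι → ℝ) => cv ε x.1 x.2) := by
  unfold cv
  exact Continuous.matrix_mulVec continuous_fst.matrix_transpose (continuous_wv hε)

end Wish2

lemma continuous_unc {ι κ : Type*} : Continuous (fun G : ι × κ → ℝ => unc G) := by
  unfold unc; fun_prop

section Wish3

/-- bounded continuous -/
def BC {X : Type*} [TopologicalSpace X] (f : X → ℝ) : Prop := Continuous f ∧ ∃ C, ∀ x, |f x| ≤ C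

namespace BC
variable {X : Type*} [TopologicalSpace X] {f g : X → ℝ}
lemma const (c : ℝ) : BC (fun _ : X => c) := ⟨continuous_const, |c|, fun _ => le_rfl⟩
lemma mul (hf : BC f) (hg : BC g) : BC (fun x => f x * g x) := by
  obtain ⟨h1, C, hC⟩ := hf
  obtain ⟨h2, D, hD⟩ := hg
  refine ⟨h1.mul h2, C * D, fun x => ?_⟩
  rw [abs_mul]
  exact mul_le_mul (hC x) (hD x) (abs_nonneg _) ((abs_nonneg _).trans (hC x))
lemma add (hf : BC f) (hg : BC g) : BC (fun x => f x + g x) := by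
  obtain ⟨h1, C, hC⟩ := hf
  obtain ⟨h2, D, hD⟩ := hg
  exact ⟨h1.add h2, C + D, fun x => (abs_add_le _ _).trans (add_le_add (hC x) (hD x))⟩
lemma sub (hf : BC f) (hg : BC g) : BC (fun x => f x - g x) := by
  obtain ⟨h1, C, hC⟩ := hf
  obtain ⟨h2, D, hD⟩ := hg
  exact ⟨h1.sub h2, C + D, fun x => (abs_sub _ _).trans (add_le_add (hC x) (hD x))⟩
lemma pow (hf : BC f) (n : ℕ) : BC (fun x => f x ^ n) := by
  obtain ⟨h1, C, hC⟩ := hf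
  refine ⟨h1.pow n, C ^ n, fun x => ?_⟩
  rw [abs_pow]
  exact pow_le_pow_left₀ (abs_nonneg _) (hC x) n
lemma comp {Y : Type*} [TopologicalSpace Y] {u : Y → X} (hf : BC f) (hu : Continuous u) :
    BC (fun y => f (u y)) := ⟨hf.1.comp hu, hf.2.choose, fun y => hf.2.choose_spec (u y)⟩
lemma sum {ι : Type*} (s : Finset ι) {f : ι → X → ℝ} (hf : ∀ i ∈ s, BC (f i)) :
    BC (fun x => ∑ i ∈ s, f i x) := by
  refine ⟨continuous_finsetSum _ fun i hi => (hf i hi).1, ∑ i ∈ s.attach, (hf i.1 i.2).2.choose, fun x => ?_⟩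
  refine (Finset.abs_sum_le_sum_abs _ _).trans ?_
  rw [← Finset.sum_attach]
  exact Finset.sum_le_sum fun i _ => (hf i.1 i.2).2.choose_spec x
lemma integrable [MeasurableSpace X] [OpensMeasurableSpace X] [SecondCountableTopology X]
    (hf : BC f) (μ : Measure X) [IsFiniteMeasure μ] : Integrable f μ := by
  obtain ⟨h1, C, hC⟩ := hf
  exact (integrable_const C).mono' h1.aestronglyMeasurable (Filter.Eventually.of_forall hC)
lemma integrable_coord_mul {J : Type*} [Fintype J] {f : (J → ℝ) → ℝ} (hf : BC f) (i : J) :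
    Integrable (fun g => g i * f g) (gv J) := by
  obtain ⟨h1, C, hC⟩ := hf
  refine ((integrable_coord i).abs.mul_const C).mono' ((continuous_apply i).mul h1).aestronglyMeasurable
    (Filter.Eventually.of_forall fun g => ?_)
  rw [Real.norm_eq_abs, abs_mul]
  exact mul_le_mul_of_nonneg_left (hC g) (abs_nonneg _)
end BC

variable {ι κ : Type*} [Fintype ι] [Fintype κ]

variable {ε : ℝ}

lemma BC_ph (hε : 0 < ε) (h : ι → ℝ) : BC (fun M : Matrix ι κ ℝ => ph ε M h) :=
  ⟨(continuous_ph hε).comp (continuous_id.prodMk continuous_const), ε⁻¹ * (h ⬝ᵥ h), fun M => by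
    rw [abs_of_nonneg (ph_nonneg hε M h)]; exact ph_le hε M h⟩

lemma abs_le_of_sq (hε : 0 < ε) (x C : ℝ) (hx : x ^ 2 ≤ C) : |x| ≤ 1 + C := by
  refine abs_le_of_sq_le_sq ?_ (by nlinarith [sq_nonneg x])
  nlinarith [sq_nonneg x]

lemma BC_cv (hε : 0 < ε) (h : ι → ℝ) (b : κ) : BC (fun M : Matrix ι κ ℝ => cv ε M h b) :=
  ⟨(continuous_apply b).comp ((continuous_cv hε).comp (continuous_id.prodMk continuous_const)),
    1 + ε⁻¹ * (h ⬝ᵥ h), fun M => abs_le_of_sq hε _ _ (by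
      refine le_trans ?_ ((cv_sq_le hε M h).trans (ph_le hε M h))
      rw [sq]
      exact Finset.single_le_sum (f := fun b => cv ε M h b * cv ε M h b)
        (fun i _ => mul_self_nonneg _) (Finset.mem_univ b))⟩

lemma BC_wv (hε : 0 < ε) (h : ι → ℝ) (a : ι) : BC (fun M : Matrix ι κ ℝ => wv ε M h a) := by
  have hc : Continuous (fun M : Matrix ι κ ℝ => wv ε M h) := by
    unfold wv
    exact (continuous_Wm hε).matrix_mulVec continuous_const
  refine ⟨(continuous_apply a).comp hc, 1 + ε⁻¹ * (ε⁻¹ * (h ⬝ᵥ h)), fun M => ?_⟩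
  refine abs_le_of_sq hε _ _ ?_
  have h1 : wv ε M h a ^ 2 ≤ wv ε M h ⬝ᵥ wv ε M h := by
    rw [sq]
    exact Finset.single_le_sum (f := fun b => wv ε M h b * wv ε M h b)
      (fun i _ => mul_self_nonneg _) (Finset.mem_univ a)
  have h2 := (wv_sq_le hε M h).trans (ph_le hε M h)
  have h3 : wv ε M h ⬝ᵥ wv ε M h ≤ ε⁻¹ * (ε⁻¹ * (h ⬝ᵥ h)) := by
    rw [inv_mul_eq_div (b := ε⁻¹ * (h ⬝ᵥ h)), le_div_iff₀ hε]
    linarith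
  exact h1.trans h3

lemma BC_U (hε : 0 < ε) (a : ι) (b : κ) : BC (fun M : Matrix ι κ ℝ => (Wm ε M * M) a b) :=
  ⟨((continuous_Wm hε).matrix_mul continuous_id).matrix_elem a b, _, fun M => U_bound hε M a b⟩

lemma BC_Z (hε : 0 < ε) (b : κ) : BC (fun M : Matrix ι κ ℝ => (Mᵀ * Wm ε M * M) b b) :=
  ⟨((continuous_id.matrix_transpose.matrix_mul (continuous_Wm hε)).matrix_mul
    continuous_id).matrix_elem b b, _, fun M => by
    rw [abs_of_nonneg (Z_nonneg hε M b)]; exact Z_le hε M b⟩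

/-- derivative of the Stein field -/
noncomputable def fD (ε : ℝ) (q : ℕ) (h : ι → ℝ) (a : ι) (b : κ) (M : Matrix ι κ ℝ) : ℝ :=
  h a * ((wv ε M h a - (Wm ε M * M) a b * cv ε M h b
    - (Mᵀ * Wm ε M * M) b b * wv ε M h a) * ph ε M h ^ q
    + cv ε M h b * (q * ph ε M h ^ (q - 1) * (-2 * wv ε M h a * cv ε M h b)))

lemma BC_fD (hε : 0 < ε) (h : ι → ℝ) (q : ℕ) (a : ι) (b : κ) : BC (fun M : Matrix ι κ ℝ => fD ε q h a b M) := by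
  unfold fD
  refine (BC.const _).mul (((((BC_wv hε h a).sub ((BC_U hε a b).mul (BC_cv hε h b))).sub
    ((BC_Z hε b).mul (BC_wv hε h a))).mul ((BC_ph hε h).pow q)).add ((BC_cv hε h b).mul
    (((BC.const _).mul ((BC_ph hε h).pow _)).mul (((BC.const _).mul (BC_wv hε h a)).mul
      (BC_cv hε h b)))))

lemma sum_fD (hε : 0 < ε) (h : ι → ℝ) (q : ℕ) (M : Matrix ι κ ℝ) :
    ((Fintype.card κ : ℝ) - Fintype.card ι - 1 - 2 * q) * ph ε M h ^ (q + 1)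
      ≤ ∑ a, ∑ b, fD ε q h a b M := by
  have e : ∑ a, ∑ b, fD ε q h a b M = ph ε M h ^ q * (ph ε M h * Fintype.card κ
      - cv ε M h ⬝ᵥ cv ε M h - (Mᵀ * Wm ε M * M).trace * ph ε M h)
      - 2 * q * (ph ε M h ^ (q - 1) * ph ε M h) * (cv ε M h ⬝ᵥ cv ε M h) := by
    have e1 : ∀ a b, fD ε q h a b M = ph ε M h ^ q * (h a * wv ε M h a)
      - ph ε M h ^ q * (h a * (Wm ε M * M) a b * cv ε M h b)
      - ph ε M h ^ q * ((h a * wv ε M h a) * (Mᵀ * Wm ε M * M) b b)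
      - 2 * q * ph ε M h ^ (q - 1) * ((h a * wv ε M h a) * (cv ε M h b * cv ε M h b)) := by
      intro a b; unfold fD; ring
    simp_rw [e1, Finset.sum_sub_distrib, ← Finset.mul_sum]
    have e2 : ∑ a, ∑ b, h a * (Wm ε M * M) a b * cv ε M h b = cv ε M h ⬝ᵥ cv ε M h := by
      rw [Finset.sum_comm]
      refine Finset.sum_congr rfl fun b _ => ?_
      rw [← Finset.sum_mul, ← cv_apply hε]
    have e3 : ∑ a, h a * wv ε M h a = ph ε M h := rfl
    have e4 : ∑ b, (Mᵀ * Wm ε M * M) b b = (Mᵀ * Wm ε M * M).trace := rfl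
    have e5 : ∑ b, cv ε M h b * cv ε M h b = cv ε M h ⬝ᵥ cv ε M h := rfl
    simp_rw [e2, e5, e4, ← Finset.sum_mul, e3, Finset.sum_const, Finset.card_univ, nsmul_eq_mul]
    have e6 : ∑ x, h x * ((Fintype.card κ : ℝ) * wv ε M h x) = Fintype.card κ * ph ε M h := by
      rw [← e3, Finset.mul_sum]
      exact Finset.sum_congr rfl fun x _ => by ring
    rw [e6]
    ring
  rw [e]
  have hp := ph_nonneg hε M h
  have hc := cv_sq_le hε M h
  have hz := trZ_le hε M
  have hq : (q:ℝ) * (ph ε M h ^ (q - 1) * ph ε M h) = q * ph ε M h ^ q := by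
    rcases q with _ | q
    · simp
    · rw [Nat.add_sub_cancel, ← pow_succ]
  have hpq : 0 ≤ ph ε M h ^ q := pow_nonneg hp q
  have h1 : 2 * q * (ph ε M h ^ (q - 1) * ph ε M h) * (cv ε M h ⬝ᵥ cv ε M h)
      ≤ 2 * (q * ph ε M h ^ q) * ph ε M h := by
    rw [mul_assoc 2, hq]
    exact mul_le_mul_of_nonneg_left hc (by positivity)
  have h2 : ph ε M h * (Fintype.card κ - Fintype.card ι - 1) ≤ ph ε M h * Fintype.card κ
      - cv ε M h ⬝ᵥ cv ε M h - (Mᵀ * Wm ε M * M).trace * ph ε M h := by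
    nlinarith
  have h3 := mul_le_mul_of_nonneg_left h2 hpq
  rw [pow_succ]
  nlinarith

lemma ph_moment_step (hε : 0 < ε) (h : ι → ℝ) (q : ℕ) :
    ((Fintype.card κ : ℝ) - Fintype.card ι - 1 - 2 * q) *
      ∫ G, ph ε (unc G : Matrix ι κ ℝ) h ^ (q + 1) ∂(gv (ι × κ))
      ≤ (h ⬝ᵥ h) * ∫ G, ph ε (unc G : Matrix ι κ ℝ) h ^ q ∂(gv (ι × κ)) := by
  have hf : ∀ a b, BC (fun G : ι × κ → ℝ => h a * cv ε (unc G) h b * ph ε (unc G) h ^ q) :=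
    fun a b => (((BC.const (h a)).mul (BC_cv hε h b)).mul ((BC_ph hε h).pow q)).comp continuous_unc
  have hD : ∀ a b, BC (fun G : ι × κ → ℝ => fD ε q h a b (unc G)) := fun a b =>
    (BC_fD hε h q a b).comp continuous_unc
  have hp : ∀ q, BC (fun G : ι × κ → ℝ => ph ε (unc G : Matrix ι κ ℝ) h ^ q) := fun q =>
    ((BC_ph hε h).pow q).comp continuous_unc
  have st : ∀ a b, ∫ G : ι × κ → ℝ, G (a, b) * (h a * cv ε (unc G) h b * ph ε (unc G) h ^ q)
      ∂(gv (ι × κ)) = ∫ G, fD ε q h a b (unc G) ∂(gv (ι × κ)) := by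
    intro a b
    refine stein_pi (a, b) _ (fun G => fD ε q h a b (unc G)) (fun G s => ?_)
      ((hf a b).integrable _) ((hf a b).integrable_coord_mul _) ((hD a b).integrable _)
    have := ((hasDerivAt_cv hε h G a b s).const_mul (h a)).mul
      ((hasDerivAt_ph hε h G a b s).pow q)
    refine this.congr_deriv ?_
    simp only [Pi.pow_apply]
    unfold fD; ring
  have s1 : ((Fintype.card κ : ℝ) - Fintype.card ι - 1 - 2 * q) *
      ∫ G, ph ε (unc G : Matrix ι κ ℝ) h ^ (q + 1) ∂(gv (ι × κ)) ≤
      ∑ a, ∑ b, ∫ G, fD ε q h a b (unc G) ∂(gv (ι × κ)) := by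
    rw [← integral_const_mul]
    simp_rw [← integral_finsetSum Finset.univ fun b (_ : b ∈ Finset.univ) => (hD _ b).integrable (gv (ι × κ))]
    rw [← integral_finsetSum _ fun a _ => (BC.sum _ fun b _ => hD a b).integrable _]
    refine integral_mono (((hp _).integrable _).const_mul _)
      ((BC.sum _ fun a _ => BC.sum _ fun b _ => hD a b).integrable _) fun G => sum_fD hε h q _
  refine s1.trans ?_
  simp_rw [← st]
  simp_rw [← integral_finsetSum Finset.univ fun b (_ : b ∈ Finset.univ) =>
    (hf _ b).integrable_coord_mul (_, b)]
  rw [← integral_finsetSum _ fun a _ => integrable_finsetSum _ fun b _ =>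
    (hf a b).integrable_coord_mul (a, b), ← integral_const_mul]
  refine integral_mono (integrable_finsetSum _ fun a _ => integrable_finsetSum _ fun b _ =>
    (hf a b).integrable_coord_mul (a, b)) (((hp _).integrable _).const_mul _) fun G => ?_
  have : ∑ a, ∑ b, G (a, b) * (h a * cv ε (unc G) h b * ph ε (unc G) h ^ q)
      = (h ⬝ᵥ h - ε * ph ε (unc G) h) * ph ε (unc G) h ^ q := by
    have e1 : h ⬝ᵥ h - ε * ph ε (unc G) h = h ⬝ᵥ ((unc G) *ᵥ cv ε (unc G) h) := by
      unfold cv wv ph wv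
      rw [Matrix.mulVec_mulVec, Matrix.mulVec_mulVec, mmt_Wm hε,
        Matrix.sub_mulVec, dotProduct_sub, Matrix.one_mulVec, Matrix.smul_mulVec, dotProduct_smul,
        smul_eq_mul]
    rw [e1, dotProduct, Finset.sum_mul]
    refine Finset.sum_congr rfl fun a _ => ?_
    simp only [Matrix.mulVec, dotProduct, Finset.mul_sum, Finset.sum_mul, unc, Matrix.of_apply]
    refine Finset.sum_congr rfl fun b _ => ?_
    ring
  simp only [this]
  refine mul_le_mul_of_nonneg_right ?_ (pow_nonneg (ph_nonneg hε _ h) q)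
  nlinarith [ph_nonneg hε (unc G) h]

end Wish3

section Moments
variable {ι : Type*} [Fintype ι]

lemma integrable_pow_gauss (m : ℕ) : Integrable (fun x : ℝ => x ^ m) (gaussianReal 0 1) := by
  have h := (memLp_id_gaussianReal (μ := 0) (v := 1) m).integrable_norm_pow'
  refine h.mono' (by fun_prop) (Filter.Eventually.of_forall fun x => ?_)
  simp

lemma integrable_mvpoly (p : MvPolynomial ι ℝ) :
    Integrable (fun g : ι → ℝ => MvPolynomial.eval g p) (gv ι) := by
  simp_rw [MvPolynomial.eval_eq']
  refine integrable_finsetSum _ fun d _ => Integrable.const_mul ?_ _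
  exact Integrable.fintype_prod (f := fun i x => x ^ d i) (fun i => integrable_pow_gauss (d i))

/-- `v · X` as a polynomial -/
noncomputable def linP (v : ι → ℝ) : MvPolynomial ι ℝ := ∑ i, MvPolynomial.C (v i) * MvPolynomial.X i
noncomputable def sqP (ι : Type*) [Fintype ι] : MvPolynomial ι ℝ := ∑ i : ι, MvPolynomial.X i * MvPolynomial.X i

lemma eval_linP (v g : ι → ℝ) : MvPolynomial.eval g (linP v) = v ⬝ᵥ g := by
  simp [linP, dotProduct]
lemma eval_sqP (g : ι → ℝ) : MvPolynomial.eval g (sqP ι) = g ⬝ᵥ g := by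
  simp [sqP, dotProduct]

lemma integrable_lin_pow (v : ι → ℝ) (m : ℕ) : Integrable (fun g => (v ⬝ᵥ g) ^ m) (gv ι) := by
  simpa [eval_linP] using integrable_mvpoly (linP v ^ m)
lemma integrable_coord_lin_pow (v : ι → ℝ) (i : ι) (m : ℕ) :
    Integrable (fun g => g i * (v ⬝ᵥ g) ^ m) (gv ι) := by
  refine (integrable_mvpoly (MvPolynomial.X i * linP v ^ m)).congr
    (Filter.Eventually.of_forall fun g => ?_)
  dsimp only
  rw [MvPolynomial.eval_mul, MvPolynomial.eval_pow, MvPolynomial.eval_X, eval_linP]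
lemma integrable_sq_pow (m : ℕ) : Integrable (fun g : ι → ℝ => (g ⬝ᵥ g) ^ m) (gv ι) := by
  simpa [eval_sqP] using integrable_mvpoly (sqP ι ^ m)
lemma integrable_coord_sq_pow (i : ι) (m r : ℕ) :
    Integrable (fun g => g i ^ r * (g ⬝ᵥ g) ^ m) (gv ι) := by
  refine (integrable_mvpoly (MvPolynomial.X i ^ r * sqP ι ^ m)).congr
    (Filter.Eventually.of_forall fun g => ?_)
  dsimp only
  rw [MvPolynomial.eval_mul, MvPolynomial.eval_pow, MvPolynomial.eval_pow, MvPolynomial.eval_X, eval_sqP]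

lemma hasDerivAt_lin (v g : ι → ℝ) (i : ι) (s : ℝ) :
    HasDerivAt (fun s => v ⬝ᵥ Function.update g i s) (v i) s := by
  have : HasDerivAt (fun s => v ⬝ᵥ Function.update g i s) (∑ j, v j * (if j = i then 1 else 0)) s := by
    refine HasDerivAt.fun_sum fun j _ => HasDerivAt.const_mul _ ?_
    by_cases h : j = i
    · subst h; simpa using hasDerivAt_id' s
    · simpa [h] using hasDerivAt_const s (g j)
  simpa using this

lemma hasDerivAt_sq (g : ι → ℝ) (i : ι) (s : ℝ) :
    HasDerivAt (fun s => Function.update g i s ⬝ᵥ Function.update g i s)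
      (2 * Function.update g i s i) s := by
  have : HasDerivAt (fun s => Function.update g i s ⬝ᵥ Function.update g i s)
      (∑ j, ((if j = i then 1 else 0) * Function.update g i s j
        + Function.update g i s j * (if j = i then 1 else 0))) s := by
    have hj : ∀ j, HasDerivAt (fun s => Function.update g i s j) (if j = i then (1:ℝ) else 0) s := by
      intro j
      by_cases h : j = i
      · subst h; simpa using hasDerivAt_id' s
      · simpa [h] using hasDerivAt_const s (g j)
    exact HasDerivAt.fun_sum fun j _ => (hj j).mul (hj j)
  refine this.congr_deriv ?_
  simp [Finset.sum_add_distrib]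
  ring

lemma lin_moment (v : ι → ℝ) (q : ℕ) :
    ∫ g, (v ⬝ᵥ g) ^ (2 * q) ∂(gv ι) = (v ⬝ᵥ v) ^ q * ∏ i ∈ Finset.range q, (2 * (i:ℝ) + 1) := by
  induction q with
  | zero => simp
  | succ q ih =>
    have e : ∀ g : ι → ℝ, (v ⬝ᵥ g) ^ (2 * (q + 1)) = ∑ i, v i * (g i * (v ⬝ᵥ g) ^ (2 * q + 1)) := by
      intro g
      rw [show 2 * (q + 1) = (2 * q + 1) + 1 by ring, pow_succ', dotProduct, Finset.sum_mul]
      exact Finset.sum_congr rfl fun i _ => by rw [mul_assoc]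
    simp_rw [e]
    rw [integral_finsetSum _ fun i _ => (integrable_coord_lin_pow v i _).const_mul _]
    have st : ∀ i, ∫ g, g i * (v ⬝ᵥ g) ^ (2 * q + 1) ∂(gv ι)
        = ∫ g, (2 * (q:ℝ) + 1) * v i * (v ⬝ᵥ g) ^ (2 * q) ∂(gv ι) := by
      intro i
      refine stein_pi i (fun g => (v ⬝ᵥ g) ^ (2 * q + 1)) _ (fun g s => ?_)
        (integrable_lin_pow v _) (integrable_coord_lin_pow v i _)
        ((integrable_lin_pow v _).const_mul _)
      have := (hasDerivAt_lin v g i s).fun_pow (2 * q + 1)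
      refine this.congr_deriv ?_
      rw [Nat.add_sub_cancel]
      push_cast
      ring
    simp_rw [integral_const_mul, st, integral_const_mul, ih]
    rw [Finset.prod_range_succ, pow_succ (v ⬝ᵥ v)]
    conv_rhs => rw [dotProduct, mul_assoc, Finset.sum_mul, Finset.mul_sum]
    refine Finset.sum_congr rfl fun i _ => ?_
    rw [dotProduct]
    ring

lemma sq_moment (q : ℕ) :
    ∫ g, (g ⬝ᵥ g) ^ q ∂(gv ι) = ∏ i ∈ Finset.range q, ((Fintype.card ι : ℝ) + 2 * i) := by
  induction q with
  | zero => simp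
  | succ q ih =>
    have e : ∀ g : ι → ℝ, (g ⬝ᵥ g) ^ (q + 1) = ∑ i, (g i * (g i * (g ⬝ᵥ g) ^ q)) := by
      intro g
      rw [pow_succ']
      conv_lhs => rw [dotProduct]
      rw [Finset.sum_mul]
      exact Finset.sum_congr rfl fun i _ => by rw [mul_assoc]; rfl
    have I1 : ∀ i : ι, ∀ m, Integrable (fun g : ι → ℝ => g i * (g i * (g ⬝ᵥ g) ^ m)) (gv ι) := fun i m => by
      have := integrable_coord_sq_pow i m 2
      refine this.congr (Filter.Eventually.of_forall fun g => ?_)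
      simp only; ring
    have I2 : ∀ i : ι, Integrable (fun g : ι → ℝ => (g ⬝ᵥ g) ^ q
      + 2 * (q:ℝ) * (g i * (g i * (g ⬝ᵥ g) ^ (q - 1)))) (gv ι) := fun i =>
      (integrable_sq_pow q).add ((I1 i (q - 1)).const_mul _)
    simp_rw [e]
    rw [integral_finsetSum _ fun i _ => I1 i q]
    have st : ∀ i, ∫ g : ι → ℝ, g i * (g i * (g ⬝ᵥ g) ^ q) ∂(gv ι)
        = ∫ g, ((g ⬝ᵥ g) ^ q + 2 * (q:ℝ) * (g i * (g i * (g ⬝ᵥ g) ^ (q - 1)))) ∂(gv ι) := by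
      intro i
      refine stein_pi i (fun g => g i * (g ⬝ᵥ g) ^ q) _ (fun g s => ?_)
        (by simpa using integrable_coord_sq_pow i q 1) (I1 i q) (I2 i)
      have h1 : HasDerivAt (fun s => Function.update g i s i) 1 s := by
        simpa using hasDerivAt_id' s
      have := h1.fun_mul ((hasDerivAt_sq g i s).fun_pow q)
      refine this.congr_deriv ?_
      ring
    simp_rw [st]
    rw [← integral_finsetSum _ fun i _ => I2 i, Finset.prod_range_succ, ← ih, ← integral_mul_const]
    congr 1
    ext g
    rw [Finset.sum_add_distrib, ← Finset.mul_sum]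
    have e2 : ∑ i, g i * (g i * (g ⬝ᵥ g) ^ (q - 1)) = (g ⬝ᵥ g) * (g ⬝ᵥ g) ^ (q - 1) := by
      conv_rhs => rw [dotProduct]
      rw [Finset.sum_mul]
      exact Finset.sum_congr rfl fun i _ => by rw [mul_assoc]; rfl
    rw [e2]
    simp only [Finset.sum_const, Finset.card_univ, nsmul_eq_mul]
    rcases q with _ | q
    · simp
    · rw [Nat.add_sub_cancel, ← pow_succ']; ring

end Moments

section Arith

noncomputable def Dq (q : ℕ) : ℝ := ∏ i ∈ Finset.range q, (2 * (i:ℝ) + 1)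
noncomputable def Eq' (q : ℕ) : ℝ := ∏ i ∈ Finset.range q, (2 * (i:ℝ) + 2)

lemma Dq_succ (q : ℕ) : Dq (q + 1) = Dq q * (2 * q + 1) := Finset.prod_range_succ _ _
lemma Eq_succ (q : ℕ) : Eq' (q + 1) = Eq' q * (2 * q + 2) := Finset.prod_range_succ _ _
lemma Dq_pos (q : ℕ) : 0 < Dq q := Finset.prod_pos fun i _ => by positivity
lemma Eq_pos (q : ℕ) : 0 < Eq' q := Finset.prod_pos fun i _ => by positivity

lemma DE_fac (q : ℕ) : Dq q * Eq' q = ((2 * q).factorial : ℝ) := by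
  induction q with
  | zero => simp [Dq, Eq']
  | succ q ih =>
    rw [Dq_succ, Eq_succ, show 2 * (q + 1) = (2 * q + 1) + 1 by ring, Nat.factorial_succ,
      Nat.factorial_succ]
    push_cast
    rw [← ih]; ring

lemma wallis (q : ℕ) (hq : 1 ≤ q) : Eq' q ^ 2 ≤ 4 * q * Dq q ^ 2 := by
  induction q, hq using Nat.le_induction with
  | base => norm_num [Dq, Eq']
  | succ q hq ih =>
    rw [Dq_succ, Eq_succ]
    push_cast
    have h1 : (Eq' q * (2 * q + 2)) ^ 2 ≤ 4 * q * Dq q ^ 2 * (2 * q + 2) ^ 2 := by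
      rw [mul_pow]; exact mul_le_mul_of_nonneg_right ih (by positivity)
    refine h1.trans ?_
    have h2 : 0 ≤ Dq q ^ 2 * (q + 1) := by positivity
    nlinarith

lemma arith (p : ℕ) (hp : 2 ≤ p) : ((p:ℝ) / Real.exp 1) ^ (2 * (p / 2)) ≤
    (∏ i ∈ Finset.range (p / 2), (2 * (i:ℝ) + 1)) *
      ∏ i ∈ Finset.range (p / 2), ((p:ℝ) - 1 - 2 * i) := by
  obtain ⟨q, hq⟩ : ∃ q, q = p / 2 := ⟨_, rfl⟩
  rw [← hq]
  have hq1 : 1 ≤ q := by omega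
  have hq1' : (1:ℝ) ≤ q := by exact_mod_cast hq1
  have S := Stirling.le_factorial_stirling (2 * q)
  rw [← DE_fac] at S
  push_cast at S
  have hpi := Real.pi_gt_three
  rcases Nat.even_or_odd' p with ⟨r, hr | hr⟩
  · have : r = q := by omega
    subst this
    have e : ∏ i ∈ Finset.range r, ((p:ℝ) - 1 - 2 * i) = Dq r := by
      rw [Dq, ← Finset.prod_range_reflect]
      refine Finset.prod_congr rfl fun i hi => ?_
      have hi := Finset.mem_range.1 hi
      rw [hr, Nat.cast_sub (by omega), Nat.cast_sub (by omega)]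
      push_cast; ring
    rw [e, hr]
    push_cast
    change _ ≤ Dq r * Dq r
    have h1 : Eq' r ≤ 2 * √r * Dq r := by
      refine abs_le_of_sq_le_sq' ?_ (by have := Dq_pos r; positivity) |>.2
      refine (wallis r hq1).trans (le_of_eq ?_)
      rw [mul_pow, mul_pow, Real.sq_sqrt (by positivity)]; norm_num
    have h2 : 2 * √(r:ℝ) ≤ √(2 * Real.pi * (2 * r)) := by
      refine Real.le_sqrt_of_sq_le ?_
      rw [mul_pow, Real.sq_sqrt (by positivity)]
      nlinarith
    have h0 : 0 < 2 * √(r:ℝ) := by positivity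
    refine le_of_mul_le_mul_left ?_ h0
    calc _ ≤ √(2 * Real.pi * (2 * r)) * (2 * r / Real.exp 1) ^ (2 * r) :=
          mul_le_mul_of_nonneg_right h2 (by positivity)
      _ ≤ Dq r * Eq' r := S
      _ ≤ Dq r * (2 * √r * Dq r) := mul_le_mul_of_nonneg_left h1 (Dq_pos r).le
      _ = _ := by ring
  · have : r = q := by omega
    subst this
    have e : ∏ i ∈ Finset.range r, ((p:ℝ) - 1 - 2 * i) = Eq' r := by
      rw [Eq', ← Finset.prod_range_reflect]
      refine Finset.prod_congr rfl fun i hi => ?_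
      have hi := Finset.mem_range.1 hi
      rw [hr, Nat.cast_sub (by omega), Nat.cast_sub (by omega)]
      push_cast; ring
    rw [e, hr]
    change _ ≤ Dq r * Eq' r
    refine le_trans ?_ S
    push_cast
    have e1 : (2 * (r:ℝ) + 1) / Real.exp 1 = (1 + 1 / (2 * r)) * (2 * r / Real.exp 1) := by
      field_simp
    rw [e1, mul_pow]
    refine mul_le_mul_of_nonneg_right ?_ (by positivity)
    have h3 : (1 + 1 / (2 * (r:ℝ))) ^ (2 * r) ≤ Real.exp 1 := by
      have h4 : 1 + 1 / (2 * (r:ℝ)) ≤ Real.exp (1 / (2 * r)) := by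
        rw [add_comm]; exact Real.add_one_le_exp _
      refine (pow_le_pow_left₀ (by positivity) h4 _).trans (le_of_eq ?_)
      rw [← Real.exp_nat_mul]
      push_cast
      congr 1
      field_simp
    refine h3.trans ((Real.exp_one_lt_d9.le.trans (by norm_num : (2.7182818286:ℝ) ≤ 3)).trans ?_)
    refine Real.le_sqrt_of_sq_le ?_
    nlinarith

end Arith

section Tbounds
open scoped Matrix.Norms.L2Operator

lemma mean_le {X : Type*} [MeasurableSpace X] (μ : Measure X) [IsProbabilityMeasure μ] (t : X → ℝ)
    (h0 : ∀ x, 0 ≤ t x) (m : ℕ) (hm : 1 ≤ m) (a : ℝ) (ha : 0 ≤ a) (h1 : Integrable t μ)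
    (h2 : Integrable (fun x => t x ^ m) μ) (h : ∫ x, t x ^ m ∂μ ≤ a ^ m) : ∫ x, t x ∂μ ≤ a := by
  refine le_of_forall_pos_le_add fun δ hδ => ?_
  set b := a + δ
  have hb : 0 < b := by positivity
  have hab : ∫ x, t x ^ m ∂μ ≤ b ^ m := h.trans (pow_le_pow_left₀ ha (by linarith) m)
  have key : ∀ x, m * (b ^ (m-1) * t x) ≤ t x ^ m + (m - 1) * b ^ m := by
    intro x
    have := one_add_mul_le_pow (a := t x / b - 1) (by have := div_nonneg (h0 x) hb.le; linarith) m
    rw [add_sub_cancel, div_pow, le_div_iff₀ (by positivity)] at this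
    have e : b ^ m = b ^ (m - 1) * b := by rw [← pow_succ]; congr 1; omega
    have e2 : (1 + m * (t x / b - 1)) * b ^ m = m * (b ^ (m-1) * t x) - (m - 1) * b ^ m := by
      rw [e]; field_simp; ring
    linarith
  have h3 := integral_mono ((h1.const_mul (b ^ (m-1))).const_mul (m:ℝ))
    (h2.add (integrable_const _)) key
  simp only [Pi.add_apply] at h3
  rw [integral_const_mul, integral_const_mul, integral_add h2 (integrable_const _), integral_const] at h3
  simp only [probReal_univ, one_smul] at h3
  have e : b ^ m = b ^ (m - 1) * b := by rw [← pow_succ]; congr 1; omega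
  have hm' : (0:ℝ) < m := by exact_mod_cast hm
  have h4 : m * (b ^ (m-1) * ∫ x, t x ∂μ) ≤ m * (b ^ (m-1) * b) := by
    rw [← e]; linarith
  exact le_of_mul_le_mul_left (le_of_mul_le_mul_left h4 hm') (by positivity)

variable {ι κ : Type*} [Fintype ι] [Fintype κ]

/-- the regularized right inverse -/
noncomputable def Tm (ε : ℝ) (M : Matrix ι κ ℝ) : Matrix κ ι ℝ := Mᵀ * Wm ε M

lemma Tm_mulVec (ε : ℝ) (M : Matrix ι κ ℝ) (h : ι → ℝ) : Tm ε M *ᵥ h = cv ε M h := by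
  unfold Tm cv wv; rw [Matrix.mulVec_mulVec]

lemma norm_le_frob (T : Matrix ι κ ℝ) : ‖T‖ ≤ frob T := by
  refine opnorm_le _ _ (Real.sqrt_nonneg _) fun x => ?_
  refine abs_le_of_sq_le_sq' ?_ (by unfold frob; positivity) |>.2
  rw [mul_pow, norm_toLp_sq, norm_toLp_sq, frob, Real.sq_sqrt (by positivity), Finset.sum_mul,
    dotProduct]
  refine Finset.sum_le_sum fun i _ => ?_
  have := Finset.sum_mul_sq_le_sq_mul_sq Finset.univ (fun j => T i j) x
  rw [← sq]
  refine this.trans (le_of_eq ?_)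
  simp [dotProduct, sq]

variable {ε : ℝ}

lemma continuous_Tm (hε : 0 < ε) : Continuous (fun M : Matrix ι κ ℝ => Tm ε M) := by
  unfold Tm
  exact continuous_id.matrix_transpose.matrix_mul (continuous_Wm hε)

lemma frob_Tm_sq_le (hε : 0 < ε) (M : Matrix ι κ ℝ) : frob (Tm ε M) ^ 2 ≤ ∑ a, ph ε M (Pi.single a 1) := by
  rw [frob, Real.sq_sqrt (by positivity), Finset.sum_comm]
  refine Finset.sum_le_sum fun a _ => ?_
  refine le_trans (le_of_eq ?_) (cv_sq_le hε M (Pi.single a 1))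
  rw [← Tm_mulVec, dotProduct]
  simp [sq]

lemma frob_Wm_sq_le (hε : 0 < ε) (M : Matrix ι κ ℝ) : ε * frob (Wm ε M) ^ 2 ≤ ∑ a, ph ε M (Pi.single a 1) := by
  rw [frob, Real.sq_sqrt (by positivity), Finset.sum_comm, Finset.mul_sum]
  refine Finset.sum_le_sum fun a _ => ?_
  refine le_trans (le_of_eq ?_) (wv_sq_le hε M (Pi.single a 1))
  rw [wv, dotProduct]
  simp [sq]

lemma sum_ph_nonneg (hε : 0 < ε) (M : Matrix ι κ ℝ) : 0 ≤ ∑ a, ph ε M (Pi.single a 1) :=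
  Finset.sum_nonneg fun a _ => ph_nonneg hε M _

lemma eps_Wm_le (hε : 0 < ε) (M : Matrix ι κ ℝ) : ε * ‖Wm ε M‖ ≤ √ε * (1 + ∑ a, ph ε M (Pi.single a 1)) := by
  have h1 := frob_Wm_sq_le hε M
  have h2 := norm_le_frob (Wm ε M)
  have h3 := sum_ph_nonneg hε M
  set S := ∑ a, ph ε M (Pi.single a 1)
  have hs := Real.sqrt_pos.2 hε
  have h4 : √ε * ‖Wm ε M‖ ≤ 1 + S := by
    refine abs_le_of_sq_le_sq' ?_ (by positivity) |>.2
    rw [mul_pow, Real.sq_sqrt hε.le]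
    have := mul_le_mul_of_nonneg_left (pow_le_pow_left₀ (norm_nonneg _) h2 2) hε.le
    nlinarith
  calc ε * ‖Wm ε M‖ = √ε * (√ε * ‖Wm ε M‖) := by rw [← mul_assoc, Real.mul_self_sqrt hε.le]
    _ ≤ _ := mul_le_mul_of_nonneg_left h4 hs.le

lemma BC_sum_ph (hε : 0 < ε) : BC (fun M : Matrix ι κ ℝ => ∑ a, ph ε M (Pi.single a 1)) :=
  BC.sum _ fun a _ => BC_ph hε _

lemma BC_frobT (hε : 0 < ε) : BC (fun M : Matrix ι κ ℝ => frob (Tm ε M)) := by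
  obtain ⟨C, hC⟩ := (BC_sum_ph (ι := ι) (κ := κ) hε).2
  refine ⟨?_, 1 + C, fun M => abs_le_of_sq hε _ _ ?_⟩
  · unfold frob
    refine Real.continuous_sqrt.comp (continuous_finsetSum _ fun i _ => continuous_finsetSum _ fun j _ =>
      ((continuous_Tm hε).matrix_elem i j).pow 2)
  · exact (frob_Tm_sq_le hε M).trans ((le_abs_self _).trans (hC M))

lemma BC_normT (hε : 0 < ε) : BC (fun M : Matrix ι κ ℝ => ‖Tm ε M‖) := by
  obtain ⟨C, hC⟩ := (BC_frobT (ι := ι) (κ := κ) hε).2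
  refine ⟨(continuous_Tm hε).norm, C, fun M => ?_⟩
  rw [abs_of_nonneg (norm_nonneg _)]
  exact (norm_le_frob _).trans ((le_abs_self _).trans (hC M))

lemma ph_moment (hε : 0 < ε) (h : ι → ℝ) (q : ℕ) (hc : ∀ i < q, 0 ≤ (Fintype.card κ : ℝ) - Fintype.card ι - 1 - 2 * i) :
    (∏ i ∈ Finset.range q, ((Fintype.card κ : ℝ) - Fintype.card ι - 1 - 2 * i)) *
      ∫ G, ph ε (unc G : Matrix ι κ ℝ) h ^ q ∂(gv (ι × κ)) ≤ (h ⬝ᵥ h) ^ q := by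
  induction q with
  | zero => simp
  | succ q ih =>
    rw [Finset.prod_range_succ, mul_assoc]
    refine (mul_le_mul_of_nonneg_left (ph_moment_step hε h q)
      (Finset.prod_nonneg fun i hi => hc i ((Finset.mem_range.1 hi).trans (Nat.lt_succ_self q)))).trans ?_
    have := ih fun i hi => hc i (hi.trans (Nat.lt_succ_self q))
    have h0 : 0 ≤ h ⬝ᵥ h := by rw [← norm_toLp_sq]; positivity
    calc _ = (h ⬝ᵥ h) * _ := by rw [mul_left_comm]
      _ ≤ (h ⬝ᵥ h) * (h ⬝ᵥ h) ^ q := mul_le_mul_of_nonneg_left this h0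
      _ = _ := by ring

lemma E_sum_ph (hε : 0 < ε) (hc : 0 < (Fintype.card κ : ℝ) - Fintype.card ι - 1) :
    ∫ G, ∑ a, ph ε (unc G : Matrix ι κ ℝ) (Pi.single a 1) ∂(gv (ι × κ))
      ≤ Fintype.card ι / ((Fintype.card κ : ℝ) - Fintype.card ι - 1) := by
  rw [integral_finsetSum _ fun a _ => ((BC_ph hε _).comp continuous_unc).integrable _]
  have : ∀ a : ι, ∫ G, ph ε (unc G : Matrix ι κ ℝ) (Pi.single a 1) ∂(gv (ι × κ))
      ≤ 1 / ((Fintype.card κ : ℝ) - Fintype.card ι - 1) := by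
    intro a
    have := ph_moment (κ := κ) hε (Pi.single a 1) 1 (by intro i hi; simpa [Nat.lt_one_iff.1 hi] using hc.le)
    rw [le_div_iff₀ hc]
    simpa [mul_comm] using this
  refine (Finset.sum_le_sum fun a _ => this a).trans (le_of_eq ?_)
  simp [div_eq_mul_inv]

lemma E_frob (hε : 0 < ε) (hc : 0 < (Fintype.card κ : ℝ) - Fintype.card ι - 1) :
    ∫ G, frob (Tm ε (unc G : Matrix ι κ ℝ)) ∂(gv (ι × κ))
      ≤ √(Fintype.card ι / ((Fintype.card κ : ℝ) - Fintype.card ι - 1)) := by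
  have hB := (BC_frobT (ι := ι) (κ := κ) hε).comp continuous_unc
  refine mean_le _ _ (fun x => Real.sqrt_nonneg _) 2 (by norm_num) _ (Real.sqrt_nonneg _)
    (hB.integrable _) ((hB.pow 2).integrable _) ?_
  rw [Real.sq_sqrt (by positivity)]
  refine le_trans ?_ (E_sum_ph hε hc)
  exact integral_mono ((hB.pow 2).integrable _)
    (((BC_sum_ph hε).comp continuous_unc).integrable _) fun G => frob_Tm_sq_le hε _

lemma continuous_ph_h (hε : 0 < ε) (M : Matrix ι κ ℝ) : Continuous (fun h => ph ε M h) := by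
  unfold ph wv
  exact continuous_id.dotProduct (continuous_const.matrix_mulVec continuous_id)

lemma integrable_ph_h (hε : 0 < ε) (M : Matrix ι κ ℝ) (q : ℕ) : Integrable (fun h => ph ε M h ^ q) (gv ι) := by
  refine ((integrable_sq_pow q).const_mul (ε⁻¹ ^ q)).mono'
    ((continuous_ph_h hε M).pow q).aestronglyMeasurable (Filter.Eventually.of_forall fun h => ?_)
  rw [← mul_pow, Real.norm_of_nonneg (pow_nonneg (ph_nonneg hε M h) q)]
  exact pow_le_pow_left₀ (ph_nonneg hε M h) (ph_le hε M h) q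

lemma norm_Tm_pow_le (hε : 0 < ε) (M : Matrix ι κ ℝ) (q : ℕ) (hq : 1 ≤ q) :
    Dq q * ‖Tm ε M‖ ^ (2 * q) ≤ ∫ h, ph ε M h ^ q ∂(gv ι) := by
  set E := ∫ h, ph ε M h ^ q ∂(gv ι) with hE
  have hE0 : 0 ≤ E := integral_nonneg fun h => pow_nonneg (ph_nonneg hε M h) q
  have hD := Dq_pos q
  have key : ∀ y : κ → ℝ, Dq q * ‖WithLp.toLp 2 ((Tm ε M)ᵀ *ᵥ y)‖ ^ (2 * q)
      ≤ ‖WithLp.toLp 2 y‖ ^ (2 * q) * E := by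
    intro y
    rw [pow_mul, pow_mul, norm_toLp_sq, norm_toLp_sq, mul_comm, Dq, ← lin_moment, hE,
      ← integral_const_mul]
    refine integral_mono (integrable_lin_pow _ _) ((integrable_ph_h hε M q).const_mul _) fun h => ?_
    dsimp only
    rw [pow_mul, ← mul_pow]
    refine pow_le_pow_left₀ (sq_nonneg _) ?_ q
    have e : (Tm ε M)ᵀ *ᵥ y ⬝ᵥ h = y ⬝ᵥ cv ε M h := by
      rw [← Tm_mulVec, Matrix.dotProduct_mulVec, Matrix.mulVec_transpose]
    rw [e]
    have h1 := cv_sq_le hε M h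
    have h2 : (y ⬝ᵥ cv ε M h) ^ 2 ≤ (y ⬝ᵥ y) * (cv ε M h ⬝ᵥ cv ε M h) := by
      have := Finset.sum_mul_sq_le_sq_mul_sq Finset.univ y (cv ε M h)
      simpa [dotProduct, sq] using this
    refine h2.trans (mul_le_mul_of_nonneg_left h1 ?_)
    rw [← norm_toLp_sq]; positivity
  set c := (E / Dq q) ^ ((1:ℝ) / ((2 * q : ℕ) : ℝ)) with hc
  have hc0 : 0 ≤ c := by positivity
  have h2q : (2 * q) ≠ 0 := by omega
  have hcp : c ^ (2 * q) = E / Dq q := by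
    rw [hc, one_div]
    exact Real.rpow_inv_natCast_pow (by positivity) h2q
  have hn : ‖(Tm ε M)ᵀ‖ ≤ c := by
    refine opnorm_le _ _ hc0 fun y => ?_
    refine (pow_le_pow_iff_left₀ (norm_nonneg _) (by positivity) h2q).1 ?_
    rw [mul_pow, hcp, div_mul_eq_mul_div, le_div_iff₀ hD]
    linarith [key y]
  have hn2 : ‖(Tm ε M)ᵀ‖ = ‖Tm ε M‖ := by
    have := Matrix.l2_opNorm_conjTranspose (Tm ε M)
    rwa [Matrix.conjTranspose_eq_transpose_of_trivial] at this
  rw [hn2] at hn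
  have := pow_le_pow_left₀ (norm_nonneg _) hn (2 * q)
  rw [hcp, le_div_iff₀ hD] at this
  linarith

lemma E_norm_pow (hε : 0 < ε) (q : ℕ) (hq : 1 ≤ q)
    (hc : ∀ i < q, 0 ≤ (Fintype.card κ : ℝ) - Fintype.card ι - 1 - 2 * i) :
    (Dq q * ∏ i ∈ Finset.range q, ((Fintype.card κ : ℝ) - Fintype.card ι - 1 - 2 * i)) *
      ∫ G, ‖Tm ε (unc G : Matrix ι κ ℝ)‖ ^ (2 * q) ∂(gv (ι × κ))
      ≤ ∏ i ∈ Finset.range q, ((Fintype.card ι : ℝ) + 2 * i) := by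
  set Pc := ∏ i ∈ Finset.range q, ((Fintype.card κ : ℝ) - Fintype.card ι - 1 - 2 * i) with hPc
  have hP0 : 0 ≤ Pc := Finset.prod_nonneg fun i hi => hc i (Finset.mem_range.1 hi)
  have hB := (BC_normT (ι := ι) (κ := κ) hε).comp continuous_unc
  have hI : Integrable (fun x : (ι × κ → ℝ) × (ι → ℝ) => ph ε (unc x.1) x.2 ^ q)
      ((gv (ι × κ)).prod (gv ι)) := by
    have hcont : Continuous (fun x : (ι × κ → ℝ) × (ι → ℝ) => ph ε (unc x.1) x.2) :=
      (continuous_ph hε).comp ((continuous_unc.comp continuous_fst).prodMk continuous_snd)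
    refine (((integrable_sq_pow q).const_mul (ε⁻¹ ^ q)).comp_snd (gv (ι × κ))).mono'
      (hcont.pow q).aestronglyMeasurable (Filter.Eventually.of_forall fun x => ?_)
    rw [← mul_pow, Real.norm_of_nonneg (pow_nonneg (ph_nonneg hε _ _) q)]
    exact pow_le_pow_left₀ (ph_nonneg hε _ _) (ph_le hε _ _) q
  have s1 : Dq q * ∫ G, ‖Tm ε (unc G : Matrix ι κ ℝ)‖ ^ (2 * q) ∂(gv (ι × κ))
      ≤ ∫ G, ∫ h, ph ε (unc G : Matrix ι κ ℝ) h ^ q ∂(gv ι) ∂(gv (ι × κ)) := by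
    rw [← integral_const_mul]
    exact integral_mono (((hB.pow _).integrable _).const_mul _) hI.integral_prod_left
      fun G => norm_Tm_pow_le hε _ q hq
  rw [integral_integral_swap hI] at s1
  have s2 : Pc * ∫ h, ∫ G, ph ε (unc G : Matrix ι κ ℝ) h ^ q ∂(gv (ι × κ)) ∂(gv ι)
      ≤ ∫ h, (h ⬝ᵥ h) ^ q ∂(gv ι) := by
    rw [← integral_const_mul]
    exact integral_mono (hI.integral_prod_right.const_mul _) (integrable_sq_pow q)
      fun h => ph_moment hε h q hc
  rw [sq_moment] at s2
  refine le_trans ?_ s2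
  rw [mul_comm (Dq q), mul_assoc]
  exact mul_le_mul_of_nonneg_left s1 hP0

lemma E_norm (hε : 0 < ε) (p : ℕ) (hp : 2 ≤ p) (hcard : Fintype.card κ = Fintype.card ι + p) :
    ∫ G, ‖Tm ε (unc G : Matrix ι κ ℝ)‖ ∂(gv (ι × κ))
      ≤ Real.exp 1 * √(Fintype.card κ) / p := by
  have hB := (BC_normT (ι := ι) (κ := κ) hε).comp continuous_unc
  have hp0 : (0:ℝ) < p := by exact_mod_cast (by omega : 0 < p)
  obtain ⟨q, hq⟩ : ∃ q, q = p / 2 := ⟨_, rfl⟩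
  have hq1 : 1 ≤ q := by omega
  refine mean_le _ _ (fun x => norm_nonneg _) (2 * q) (by omega) _ (by positivity)
    (hB.integrable _) ((hB.pow _).integrable _) ?_
  have hcc : (Fintype.card κ : ℝ) - Fintype.card ι = p := by rw [hcard]; push_cast; ring
  have hc : ∀ i < q, 0 ≤ (Fintype.card κ : ℝ) - Fintype.card ι - 1 - 2 * i := by
    intro i hi
    rw [hcc]
    have : 2 * i + 1 ≤ p := by omega
    have : (2:ℝ) * i + 1 ≤ p := by exact_mod_cast this
    linarith
  have h1 := E_norm_pow (ι := ι) (κ := κ) hε q hq1 hc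
  simp only [hcc] at h1
  have h2 := arith p hp
  rw [← hq] at h2
  change _ ≤ Dq q * _ at h2
  set I := ∫ G, ‖Tm ε (unc G : Matrix ι κ ℝ)‖ ^ (2 * q) ∂(gv (ι × κ))
  have hI0 : 0 ≤ I := integral_nonneg fun G => by positivity
  have h3 : ∏ i ∈ Finset.range q, ((Fintype.card ι : ℝ) + 2 * i) ≤ (Fintype.card κ : ℝ) ^ q := by
    refine (Finset.prod_le_prod (fun i _ => by positivity) (g := fun _ => (Fintype.card κ : ℝ)) fun i hi => ?_).trans
      (le_of_eq (by simp))
    have hi := Finset.mem_range.1 hi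
    have : Fintype.card ι + 2 * i ≤ Fintype.card κ := by omega
    exact_mod_cast this
  have h4 := (mul_le_mul_of_nonneg_right h2 hI0).trans (h1.trans h3)
  have he := Real.exp_pos 1
  have h5 : I ≤ (Fintype.card κ : ℝ) ^ q / ((p:ℝ) / Real.exp 1) ^ (2 * q) := by
    rw [le_div_iff₀ (by positivity)]; linarith
  refine h5.trans (le_of_eq ?_)
  rw [div_pow, div_pow, mul_pow, pow_mul (√(Fintype.card κ : ℝ)), Real.sq_sqrt (by positivity)]
  field_simp

end Tbounds

section Spec
open scoped Matrix.Norms.L2Operator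

lemma spec {m : ℕ} {S : Matrix (Fin m) (Fin m) ℝ} (hS : S.IsHermitian) :
    ∃ U : Matrix (Fin m) (Fin m) ℝ, U * Uᵀ = 1 ∧ Uᵀ * U = 1 ∧
      S = U * diagonal hS.eigenvalues * Uᵀ := by
  refine ⟨hS.eigenvectorUnitary, ?_, ?_, ?_⟩
  · have := Unitary.mul_star_self_of_mem hS.eigenvectorUnitary.2
    rwa [Matrix.star_eq_conjTranspose, Matrix.conjTranspose_eq_transpose_of_trivial] at this
  · have := Unitary.star_mul_self_of_mem hS.eigenvectorUnitary.2
    rwa [Matrix.star_eq_conjTranspose, Matrix.conjTranspose_eq_transpose_of_trivial] at this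
  · have := hS.spectral_theorem
    rw [Unitary.conjStarAlgAut_apply] at this
    rw [Matrix.star_eq_conjTranspose, Matrix.conjTranspose_eq_transpose_of_trivial] at this
    exact this

lemma pinv_spec {m : ℕ} (S : Matrix (Fin m) (Fin m) ℝ) (hS : S.IsHermitian) :
    IsMoorePenrose S (pinv S) := by
  have hex : ∃ X, IsMoorePenrose S X := by
    obtain ⟨U, h1, h2, h3⟩ := spec hS
    set e := hS.eigenvalues
    have key : ∀ a b : Fin m → ℝ, (U * diagonal a * Uᵀ) * (U * diagonal b * Uᵀ)
        = U * diagonal (fun i => a i * b i) * Uᵀ := by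
      intro a b
      calc _ = U * diagonal a * (Uᵀ * U) * diagonal b * Uᵀ := by simp only [Matrix.mul_assoc]
        _ = _ := by rw [h2, Matrix.mul_one, Matrix.mul_assoc U, Matrix.diagonal_mul_diagonal]
    have tr : ∀ a : Fin m → ℝ, (U * diagonal a * Uᵀ)ᴴ = U * diagonal a * Uᵀ := by
      intro a
      rw [Matrix.conjTranspose_eq_transpose_of_trivial, Matrix.transpose_mul, Matrix.transpose_mul,
        Matrix.transpose_transpose, Matrix.diagonal_transpose, Matrix.mul_assoc]
    refine ⟨U * diagonal (fun i => (e i)⁻¹) * Uᵀ, ?_, ?_, ?_, ?_⟩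
    · conv_rhs => rw [h3]
      rw [h3, key, key]
      congr; ext i
      by_cases h : e i = 0
      · simp [h]
      · field_simp
    · rw [h3, key, key]
      congr; ext i
      by_cases h : e i = 0
      · simp [h]
      · field_simp
    · rw [h3, key, tr]
    · rw [h3, key, tr]
  rw [pinv, dif_pos hex]
  exact hex.choose_spec

lemma schatten_le {n : ℕ} (M : Matrix (Fin n) (Fin n) ℝ) : schatten ⊤ M ≤ ‖M‖ := by
  rw [schatten, if_pos rfl, sval]
  split_ifs with h
  · set hH := (Matrix.posSemidef_conjTranspose_mul_self M).1
    generalize (Tuple.sort hH.eigenvalues (Fin.rev ⟨0, h⟩)) = j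
    rw [Real.sqrt_le_left (norm_nonneg _), hH.eigenvalues_eq j]
    set v := hH.eigenvectorBasis j with hv
    have hn : ‖v‖ = 1 := hH.eigenvectorBasis.orthonormal.1 j
    have e : star v.ofLp ⬝ᵥ (Mᴴ * M) *ᵥ v.ofLp = ‖WithLp.toLp 2 (M *ᵥ v.ofLp)‖ ^ 2 := by
      rw [norm_toLp_sq, ← Matrix.mulVec_mulVec, Matrix.dotProduct_mulVec, star_trivial,
        Matrix.conjTranspose_eq_transpose_of_trivial, Matrix.vecMul_transpose]
    have h2 := mulVec_le M v.ofLp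
    rw [WithLp.toLp_ofLp, hn, mul_one] at h2
    rw [e]
    have h3 := pow_le_pow_left₀ (norm_nonneg _) h2 2
    exact h3
  · exact norm_nonneg _

lemma sval_nonneg {n : ℕ} (M : Matrix (Fin n) (Fin n) ℝ) (i : ℕ) : 0 ≤ sval M i := by
  rw [sval]; split_ifs
  · exact Real.sqrt_nonneg _
  · exact le_rfl

lemma sval_anti {n : ℕ} (M : Matrix (Fin n) (Fin n) ℝ) {i j : ℕ} (hij : i ≤ j) :
    sval M j ≤ sval M i := by
  by_cases hj : j < n
  · rw [sval, sval, dif_pos hj, dif_pos (hij.trans_lt hj)]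
    refine Real.sqrt_le_sqrt ?_
    refine Tuple.monotone_sort (Matrix.posSemidef_conjTranspose_mul_self M).1.eigenvalues ?_
    rw [Fin.rev_le_rev]
    exact hij
  · rw [sval, dif_neg hj]; exact sval_nonneg M i

lemma svd {n : ℕ} (A : Matrix (Fin n) (Fin n) ℝ) (hA : A.PosSemidef) :
    ∃ V : Matrix (Fin n) (Fin n) ℝ, V * Vᵀ = 1 ∧ Vᵀ * V = 1 ∧
      A = V * diagonal (fun i : Fin n => sval A i) * Vᵀ := by
  set hH := (Matrix.posSemidef_conjTranspose_mul_self A).1 with hHd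
  obtain ⟨U, h1, h2, h3⟩ := spec hH
  set π : Fin n ≃ Fin n := Fin.revPerm.trans (Tuple.sort hH.eigenvalues) with hπ
  have e1 : (U.submatrix id π) * (U.submatrix id π)ᵀ = 1 := by
    rw [Matrix.transpose_submatrix, Matrix.submatrix_mul_equiv, h1]; simp
  have e2 : (U.submatrix id π)ᵀ * (U.submatrix id π) = 1 := mul_eq_one_comm.1 e1
  refine ⟨U.submatrix id π, e1, e2, ?_⟩
  set V := U.submatrix id π
  set d := (fun i : Fin n => sval A i)
  have hd : ∀ i, d i * d i = hH.eigenvalues (π i) := by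
    intro i
    simp only [d, sval]
    rw [dif_pos i.2]
    exact Real.mul_self_sqrt ((Matrix.posSemidef_conjTranspose_mul_self A).eigenvalues_nonneg _)
  have hX : (V * diagonal d * Vᵀ).PosSemidef := by
    have : (diagonal d).PosSemidef := Matrix.PosSemidef.diagonal fun i => sval_nonneg A i
    simpa using this.mul_mul_conjTranspose_same V
  have hsq : A * A = (V * diagonal d * Vᵀ) * (V * diagonal d * Vᵀ) := by
    have : A * A = Aᴴ * A := by rw [hA.1.eq]
    rw [this, h3]
    calc _ = V * diagonal (fun i => hH.eigenvalues (π i)) * Vᵀ := by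
          rw [show diagonal (fun i => hH.eigenvalues (π i)) =
            (diagonal hH.eigenvalues).submatrix π π by
              rw [Matrix.submatrix_diagonal_equiv]; rfl]
          simp only [V]
          rw [Matrix.transpose_submatrix, Matrix.submatrix_mul_equiv, Matrix.submatrix_mul_equiv]
          simp
      _ = V * diagonal d * (Vᵀ * V) * diagonal d * Vᵀ := by
          rw [e2, Matrix.mul_one, Matrix.mul_assoc V (diagonal d), Matrix.diagonal_mul_diagonal]
          simp only [hd]
      _ = _ := by simp only [Matrix.mul_assoc]
  open scoped MatrixOrder in
  exact (CFC.mul_self_eq_mul_self_iff A _ hA.nonneg hX.nonneg).1 hsq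

end Spec

section Det
open scoped Matrix.Norms.L2Operator

lemma ct {m n : Type*} (M : Matrix m n ℝ) : Mᴴ = Mᵀ := Matrix.conjTranspose_eq_transpose_of_trivial M

lemma norm_one_le' {m : Type*} [Fintype m] : ‖(1 : Matrix m m ℝ)‖ ≤ 1 :=
  opnorm_le _ _ zero_le_one fun x => by simp

lemma norm_le_one_of {m n : Type*} [Fintype m] [Fintype n] (M : Matrix m n ℝ)
    (h : Mᵀ * M = 1) : ‖M‖ ≤ 1 := by
  have := Matrix.l2_opNorm_conjTranspose_mul_self M
  rw [ct, h] at this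
  have h1 := norm_one_le' (m := n)
  nlinarith [norm_nonneg M]

lemma norm_tr {m n : Type*} [Fintype m] [Fintype n] (M : Matrix m n ℝ) : ‖Mᵀ‖ = ‖M‖ := by
  rw [← ct]; exact Matrix.l2_opNorm_conjTranspose M

/-- operator norm, with a fixed (classical) choice of decidability instances -/
noncomputable def nrm {m n : Type*} [Fintype m] [Fintype n] (M : Matrix m n ℝ) : ℝ := ‖M‖

lemma nrm_eq {m n : Type*} [Fintype m] [Fintype n] [DecidableEq n] (M : Matrix m n ℝ) :
    nrm M = ‖M‖ := by
  unfold nrm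
  congr!

lemma norm_diag_le {m : Type*} [Fintype m] (d : m → ℝ) (c : ℝ) (hc : 0 ≤ c) (h : ∀ i, |d i| ≤ c) :
    ‖(diagonal d : Matrix m m ℝ)‖ ≤ c := by
  rw [Matrix.l2_opNorm_diagonal]
  exact (pi_norm_le_iff_of_nonneg hc).2 h

lemma nrm_diag_le {m : Type*} [Fintype m] [DecidableEq m] (d : m → ℝ) (c : ℝ) (hc : 0 ≤ c)
    (h : ∀ i, |d i| ≤ c) : nrm (diagonal d : Matrix m m ℝ) ≤ c := by
  rw [nrm_eq, Matrix.l2_opNorm_diagonal]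
  exact (pi_norm_le_iff_of_nonneg hc).2 h

lemma core_bound {n k r : Type*} [Fintype n] [Fintype k] [Fintype r]
    (V Q D D2 : Matrix n n ℝ) (Ω' : Matrix n k ℝ) (E : Matrix r n ℝ) (G : Matrix r k ℝ)
    (ε : ℝ) (hε : 0 < ε) (a b : ℝ) (ha : 0 ≤ a) (hQn : nrm Q ≤ 1) (hV2 : Vᵀ * V = 1)
    (hEE : E * Eᵀ = 1) (hEO : E * Ω' = G) (hF : D = D * (Eᵀ * E) + D2)
    (hDn : nrm D ≤ a) (hD2n : nrm D2 ≤ b) (z : Q * V * (D * Ω') = 0) :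
    nrm (Q * (V * D * Vᵀ)) ≤ b + nrm (D2 * Ω' * Tm ε G) + a * (ε * nrm (Wm ε G)) := by
  unfold nrm at *
  have hEn : ‖Eᵀ‖ ≤ 1 := norm_le_one_of _ (by rw [Matrix.transpose_transpose, hEE])
  have hEn2 : ‖E‖ ≤ 1 := by rw [← norm_tr]; exact hEn
  have hGT : G * Tm ε G = 1 - ε • Wm ε G := by
    change G * (Gᵀ * Wm ε G) = _
    rw [← Matrix.mul_assoc, mmt_Wm hε]
  set T := Tm ε G
  clear_value T
  have hN : Q * (V * D * Vᵀ) = Q * V * (D * Eᵀ * (ε • Wm ε G) * E + D2 - D2 * Ω' * T * E) * Vᵀ := by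
    have e1 : D * Eᵀ * (ε • Wm ε G) * E + D2 - D2 * Ω' * T * E = D - (D * Ω') * (T * E) := by
      have e2 : ε • Wm ε G = 1 - E * Ω' * T := by rw [hEO, hGT, sub_sub_cancel]
      have e3 : D * Ω' = D * (Eᵀ * E) * Ω' + D2 * Ω' := by
        rw [← Matrix.add_mul, ← hF]
      have e4 : D * Eᵀ * (ε • Wm ε G) * E = D * (Eᵀ * E) - D * (Eᵀ * E) * Ω' * (T * E) := by
        rw [e2]
        simp only [Matrix.mul_sub, Matrix.sub_mul, Matrix.mul_one, Matrix.mul_assoc]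
      rw [e4, e3, Matrix.add_mul, Matrix.mul_assoc (D2 * Ω') T E]
      rw [show D - (D * (Eᵀ * E) * Ω' * (T * E) + D2 * Ω' * (T * E)) =
        (D * (Eᵀ * E) + D2) - (D * (Eᵀ * E) * Ω' * (T * E) + D2 * Ω' * (T * E)) by rw [← hF]]
      abel
    rw [e1, Matrix.mul_sub, ← Matrix.mul_assoc (Q * V) (D * Ω'), z, Matrix.zero_mul, sub_zero]
    simp only [Matrix.mul_assoc]
  have hVn : ‖V‖ ≤ 1 := norm_le_one_of _ hV2
  have hVn' : ‖Vᵀ‖ ≤ 1 := by rw [norm_tr]; exact hVn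
  rw [hN]
  have b2 : ‖D * Eᵀ * (ε • Wm ε G) * E‖ ≤ a * (ε * ‖Wm ε G‖) := by
    calc _ ≤ ‖D * Eᵀ * (ε • Wm ε G)‖ * ‖E‖ := Matrix.l2_opNorm_mul _ _
      _ ≤ ‖D * Eᵀ * (ε • Wm ε G)‖ * 1 := mul_le_mul_of_nonneg_left hEn2 (norm_nonneg _)
      _ ≤ ‖D * Eᵀ‖ * ‖ε • Wm ε G‖ := by rw [mul_one]; exact Matrix.l2_opNorm_mul _ _
      _ ≤ a * ‖ε • Wm ε G‖ := mul_le_mul_of_nonneg_right ((Matrix.l2_opNorm_mul _ _).trans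
          ((mul_le_mul hDn hEn (norm_nonneg _) ha).trans (le_of_eq (mul_one _)))) (norm_nonneg _)
      _ = _ := by rw [norm_smul, Real.norm_of_nonneg hε.le]
  have b3 : ‖D2 * Ω' * T * E‖ ≤ ‖D2 * Ω' * T‖ :=
    (Matrix.l2_opNorm_mul _ _).trans ((mul_le_mul_of_nonneg_left hEn2 (norm_nonneg _)).trans
      (le_of_eq (mul_one _)))
  have b4 : ‖D * Eᵀ * (ε • Wm ε G) * E + D2 - D2 * Ω' * T * E‖ ≤
      ‖D * Eᵀ * (ε • Wm ε G) * E‖ + ‖D2‖ + ‖D2 * Ω' * T * E‖ :=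
    (norm_sub_le _ _).trans (add_le_add_left (norm_add_le _ _) _)
  generalize D * Eᵀ * (ε • Wm ε G) * E + D2 - D2 * Ω' * T * E = N at *
  have b1 : ‖Q * V * N * Vᵀ‖ ≤ ‖N‖ := by
    calc _ ≤ ‖Q * V * N‖ * ‖Vᵀ‖ := Matrix.l2_opNorm_mul _ _
      _ ≤ ‖Q * V * N‖ * 1 := mul_le_mul_of_nonneg_left hVn' (norm_nonneg _)
      _ ≤ ‖Q * V‖ * ‖N‖ := by rw [mul_one]; exact Matrix.l2_opNorm_mul _ _
      _ ≤ 1 * ‖N‖ := mul_le_mul_of_nonneg_right ((Matrix.l2_opNorm_mul _ _).trans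
          (mul_le_one₀ hQn (norm_nonneg _) hVn)) (norm_nonneg _)
      _ = _ := one_mul _
  linarith

lemma proj_facts {n k : ℕ} (K : Matrix (Fin n) (Fin k) ℝ) :
    ∃ Q : Matrix (Fin n) (Fin n) ℝ, Q = 1 - K * pinv (Kᵀ * K) * Kᵀ ∧ Qᵀ * Q = Q ∧ Q * K = 0 ∧ ‖Q‖ ≤ 1 := by
  set S := Kᵀ * K with hS
  clear_value S
  have hSs : Sᵀ = S := by rw [hS, Matrix.transpose_mul, Matrix.transpose_transpose]
  obtain ⟨h1, -, -, -⟩ := pinv_spec S (by rw [Matrix.IsHermitian, ct, hSs])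
  set X := pinv S
  clear_value X
  have h1' : S * Xᵀ * S = S := by
    have := congrArg Matrix.transpose h1
    rwa [Matrix.transpose_mul, Matrix.transpose_mul, hSs, ← Matrix.mul_assoc] at this
  have key : ∀ Y : Matrix (Fin k) (Fin k) ℝ, S * Y * S = S → K * Y * S = K := by
    intro Y hY
    have hz : Kᵀ * (K * Y * S - K) = 0 := by
      rw [Matrix.mul_sub, ← Matrix.mul_assoc, ← Matrix.mul_assoc, ← hS, hY, sub_self]
    have h0 : (K * Y * S - K)ᴴ * (K * Y * S - K) = 0 := by
      rw [ct]
      have : (K * Y * S - K)ᵀ = (S * Yᵀ - 1) * Kᵀ := by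
        rw [Matrix.transpose_sub, Matrix.transpose_mul, Matrix.transpose_mul, hSs, Matrix.sub_mul,
          Matrix.one_mul, Matrix.mul_assoc]
      rw [this, Matrix.mul_assoc, hz, Matrix.mul_zero]
    exact sub_eq_zero.1 (Matrix.conjTranspose_mul_self_eq_zero.1 h0)
  set P := K * X * Kᵀ with hP
  clear_value P
  have hPK : P * K = K := by rw [hP, Matrix.mul_assoc, ← hS]; exact key X h1
  have hPt : Pᵀ = K * Xᵀ * Kᵀ := by
    rw [hP, Matrix.transpose_mul, Matrix.transpose_mul, Matrix.transpose_transpose, Matrix.mul_assoc]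
  have hPtK : Pᵀ * K = K := by rw [hPt, Matrix.mul_assoc, ← hS]; exact key Xᵀ h1'
  have hPP : Pᵀ * P = P := by
    calc Pᵀ * P = Pᵀ * (K * X * Kᵀ) := congrArg _ hP
      _ = Pᵀ * K * X * Kᵀ := by simp only [Matrix.mul_assoc]
      _ = P := by rw [hPtK, ← hP]
  have hPs : Pᵀ = P := by
    have := congrArg Matrix.transpose hPP
    rw [Matrix.transpose_mul, Matrix.transpose_transpose, hPP] at this
    exact this.symm
  have hQQ : (1 - P)ᵀ * (1 - P) = 1 - P := by
    rw [Matrix.transpose_sub, Matrix.transpose_one, Matrix.mul_sub, Matrix.mul_one, Matrix.sub_mul,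
      Matrix.one_mul, hPP, hPs, sub_self, sub_zero]
  refine ⟨1 - P, rfl, hQQ, by rw [Matrix.sub_mul, Matrix.one_mul, hPK, sub_self], ?_⟩
  have := Matrix.l2_opNorm_conjTranspose_mul_self (1 - P)
  rw [ct, hQQ] at this
  nlinarith [norm_nonneg (1 - P)]

lemma det_bound {n k ϱ : ℕ} (hϱ : ϱ ≤ n) (A V : Matrix (Fin n) (Fin n) ℝ)
    (Ω Ω' : Matrix (Fin n) (Fin k) ℝ) (d : ℕ → ℝ) (hd0 : ∀ i, 0 ≤ d i)
    (hda : ∀ i j, i ≤ j → d j ≤ d i)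
    (hV2 : Vᵀ * V = 1) (hA : A = V * diagonal (fun i : Fin n => d i) * Vᵀ)
    (hΩ : Ω' = Vᵀ * Ω) (ε : ℝ) (hε : 0 < ε) (G : Matrix (Fin ϱ) (Fin k) ℝ)
    (hG : G = Ω'.submatrix (Fin.castLE hϱ) id) :
    √(schatten ⊤ (A - nystrom A Ω)) ≤ √(d ϱ)
      + nrm (diagonal (fun i : Fin n => if (i:ℕ) < ϱ then 0 else √(d i)) * Ω' * Tm ε G)
      + √(d 0) * (ε * nrm (Wm ε G)) := by
  obtain ⟨D, hD⟩ : ∃ D : Matrix (Fin n) (Fin n) ℝ, D = diagonal (fun i : Fin n => √(d i)) := ⟨_, rfl⟩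
  obtain ⟨D2, hD2⟩ : ∃ D : Matrix (Fin n) (Fin n) ℝ,
    D = diagonal (fun i : Fin n => if (i:ℕ) < ϱ then 0 else √(d i)) := ⟨_, rfl⟩
  obtain ⟨B, hB⟩ : ∃ B, B = V * D * Vᵀ := ⟨_, rfl⟩
  rw [← hD2]
  have hDt : Dᵀ = D := by rw [hD]; exact Matrix.diagonal_transpose _
  have hBt : Bᵀ = B := by
    rw [hB, Matrix.transpose_mul, Matrix.transpose_mul, Matrix.transpose_transpose, hDt, Matrix.mul_assoc]
  have hBB : B * B = A := by
    calc B * B = V * D * (Vᵀ * V) * D * Vᵀ := by rw [hB]; simp only [Matrix.mul_assoc]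
      _ = A := by
        rw [hV2, Matrix.mul_one, Matrix.mul_assoc V D, hD, Matrix.diagonal_mul_diagonal, hA]
        congr; ext i; exact Real.mul_self_sqrt (hd0 i)
  obtain ⟨Q, hQ, hQQ, hQK, hQn⟩ := proj_facts (B * Ω)
  have hS : Ωᴴ * A * Ω = (B * Ω)ᵀ * (B * Ω) := by
    rw [ct, ← hBB, Matrix.transpose_mul, hBt]; simp only [Matrix.mul_assoc]
  have hdiff : A - nystrom A Ω = (Q * B)ᴴ * (Q * B) := by
    have : (Q * B)ᴴ * (Q * B) = B * Q * B := by
      rw [ct, Matrix.transpose_mul, hBt]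
      calc _ = B * (Qᵀ * Q) * B := by simp only [Matrix.mul_assoc]
        _ = _ := by rw [hQQ]
    rw [this, hQ, nystrom, hS]
    generalize pinv ((B * Ω)ᵀ * (B * Ω)) = X
    rw [Matrix.mul_sub, Matrix.sub_mul, Matrix.mul_one, hBB,
      Matrix.transpose_mul, hBt, ct, ← hBB]
    simp only [Matrix.mul_assoc]
  have step1 : √(schatten ⊤ (A - nystrom A Ω)) ≤ ‖Q * B‖ := by
    rw [Real.sqrt_le_left (norm_nonneg _)]
    refine (schatten_le _).trans (le_of_eq ?_)
    rw [hdiff, Matrix.l2_opNorm_conjTranspose_mul_self, sq]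
  obtain ⟨E, hE⟩ : ∃ E : Matrix (Fin ϱ) (Fin n) ℝ,
    E = (1 : Matrix (Fin n) (Fin n) ℝ).submatrix (Fin.castLE hϱ) id := ⟨_, rfl⟩
  have hEE : E * Eᵀ = 1 := by
    rw [hE, Matrix.transpose_submatrix, Matrix.transpose_one]
    ext a b
    simp [Matrix.mul_apply, Matrix.one_apply]
  have hEO : E * Ω' = G := by
    rw [hG, hE]
    ext a b
    simp [Matrix.mul_apply, Matrix.one_apply]
  have hF : D = D * (Eᵀ * E) + D2 := by
    have : Eᵀ * E = diagonal (fun i : Fin n => if (i:ℕ) < ϱ then 1 else 0) := by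
      ext i j
      rw [Matrix.mul_apply, Matrix.diagonal_apply]
      simp only [hE, Matrix.transpose_apply, Matrix.submatrix_apply, Matrix.one_apply, id]
      by_cases hi : (i:ℕ) < ϱ
      · rw [Finset.sum_eq_single ⟨i, hi⟩]
        · simp [hi]
        · intro b _ hb
          have : Fin.castLE hϱ b ≠ i := fun h => hb (Fin.ext (by simpa using Fin.ext_iff.1 h))
          simp [this]
        · simp
      · have : ∀ b : Fin ϱ, Fin.castLE hϱ b ≠ i := fun b h => hi (by rw [← h]; exact b.2)
        simp [this, hi]
    rw [this, hD, hD2, Matrix.diagonal_mul_diagonal, Matrix.diagonal_add]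
    congr; ext i
    split_ifs <;> simp
  have z : Q * V * (D * Ω') = 0 := by
    rw [← hQK, hΩ, hB]; simp only [Matrix.mul_assoc]
  have hDn : nrm D ≤ √(d 0) := by
    rw [hD]
    refine nrm_diag_le _ _ (Real.sqrt_nonneg _) fun i => ?_
    rw [abs_of_nonneg (Real.sqrt_nonneg _)]
    exact Real.sqrt_le_sqrt (hda 0 i (Nat.zero_le _))
  have hD2n : nrm D2 ≤ √(d ϱ) := by
    rw [hD2]
    refine nrm_diag_le _ _ (Real.sqrt_nonneg _) fun i => ?_
    split_ifs with h
    · simp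
    · rw [abs_of_nonneg (Real.sqrt_nonneg _)]
      exact Real.sqrt_le_sqrt (hda ϱ i (not_lt.1 h))
  refine step1.trans ?_
  rw [← nrm_eq, hB]
  exact core_bound V Q D D2 Ω' E G ε hε _ _ (Real.sqrt_nonneg _) (by rw [nrm_eq]; exact hQn)
    (by convert hV2) (by convert hEE) hEO hF hDn hD2n z

end Det

section Main
open scoped Matrix.Norms.L2Operator

lemma integral_le_of_lintegral_le {X : Type*} [MeasurableSpace X] (μ : Measure X) (f : X → ℝ)
    (hf : ∀ x, 0 ≤ f x) (c : ℝ) (hc : 0 ≤ c) (h : ∫⁻ x, ENNReal.ofReal (f x) ∂μ ≤ ENNReal.ofReal c) :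
    ∫ x, f x ∂μ ≤ c := by
  by_cases hm : AEStronglyMeasurable f μ
  · rw [integral_eq_lintegral_of_nonneg_ae (Filter.Eventually.of_forall hf) hm]
    exact ENNReal.toReal_le_of_le_ofReal hc h
  · rw [integral_non_aestronglyMeasurable hm]; exact hc

lemma nrm_nonneg {m n : Type*} [Fintype m] [Fintype n] (M : Matrix m n ℝ) : 0 ≤ nrm M := norm_nonneg _

lemma continuous_nrm {m n : Type*} [Fintype m] [Fintype n] :
    Continuous (fun M : Matrix m n ℝ => nrm M) := by
  unfold nrm; exact continuous_norm

/-- Bound for the conditional expectation over the rows `≥ ϱ`. -/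
lemma inner_bound {ι κ μ : Type*} [Fintype ι] [Fintype κ] [Fintype μ] [DecidableEq ι]
    (s : ι → ℝ) (σ τ a : ℝ) (hσ0 : 0 ≤ σ)
    (hσ : ∀ i, |s i| ≤ σ) (hτ : √(∑ i, s i ^ 2) = τ) (ha : 0 ≤ a) (T : Matrix κ μ ℝ) :
    ∫⁻ G : ι → κ → ℝ, ENNReal.ofReal (a + nrm (diagonal s * Matrix.of G * T)) ∂(gm ι κ) ≤
      ENNReal.ofReal (a + (σ * frob T + τ * nrm T)) := by
  have h := chevet s σ hσ0 hσ T
  have e : ∀ G : ι → κ → ℝ, ENNReal.ofReal (a + nrm (diagonal s * Matrix.of G * T)) =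
      ENNReal.ofReal a + ENNReal.ofReal (nrm (diagonal s * Matrix.of G * T)) := fun G =>
    ENNReal.ofReal_add ha (nrm_nonneg _)
  simp_rw [e]
  have hprob : IsProbabilityMeasure (gm ι κ) := by unfold gm; infer_instance
  rw [lintegral_add_left measurable_const, lintegral_const, measure_univ, mul_one, hτ.symm,
    ENNReal.ofReal_add ha]
  · refine add_le_add le_rfl ?_
    refine le_trans (le_of_eq ?_) h
    refine lintegral_congr fun G => ?_
    unfold nrm
    congr!
  · have := nrm_nonneg T
    have : 0 ≤ frob T := Real.sqrt_nonneg _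
    positivity

lemma outer_bound {ι κ : Type*} [Fintype ι] [Fintype κ] {ε : ℝ} (hε : 0 < ε) (σ τ b : ℝ)
    (hσ : 0 ≤ σ) (hτ : 0 ≤ τ) (hb : 0 ≤ b) (p : ℕ) (hp : 2 ≤ p)
    (hcard : Fintype.card κ = Fintype.card ι + p) :
    ∫⁻ G : ι → κ → ℝ, ENNReal.ofReal (σ + b * (ε * nrm (Wm ε (Matrix.of G)))
       + (σ * frob (Tm ε (Matrix.of G)) + τ * nrm (Tm ε (Matrix.of G)))) ∂(gm ι κ) ≤
    ENNReal.ofReal (σ + b * (√ε * (1 + Fintype.card ι / ((Fintype.card κ:ℝ) - Fintype.card ι - 1)))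
      + (σ * √(Fintype.card ι / ((Fintype.card κ:ℝ) - Fintype.card ι - 1))
        + τ * (Real.exp 1 * √(Fintype.card κ) / p))) := by
  have hc : 0 < (Fintype.card κ : ℝ) - Fintype.card ι - 1 := by
    have : (2:ℝ) ≤ p := by exact_mod_cast hp
    rw [hcard]; push_cast; linarith
  have hprob : IsProbabilityMeasure (gv (ι × κ)) := by unfold gv; infer_instance
  let F : (ι × κ → ℝ) → ℝ := fun G => σ + b * (√ε * (1 + ∑ a, ph ε (unc G) (Pi.single a 1)))
       + (σ * frob (Tm ε (unc G)) + τ * ‖Tm ε (unc G)‖)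
  have B1 := (BC_sum_ph (ι := ι) (κ := κ) hε).comp continuous_unc
  have B2 := (BC_frobT (ι := ι) (κ := κ) hε).comp continuous_unc
  have B3 := (BC_normT (ι := ι) (κ := κ) hε).comp continuous_unc
  have I1 := B1.integrable (gv (ι × κ))
  have I2 := B2.integrable (gv (ι × κ))
  have I3 := B3.integrable (gv (ι × κ))
  have hF : Continuous F := by
    have h1 := B1.1
    have h2 := B2.1
    have h3 := B3.1
    exact (continuous_const.add (continuous_const.mul (continuous_const.mul (continuous_const.add h1)))).add
      ((continuous_const.mul h2).add (continuous_const.mul h3))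
  have J1 : Integrable (fun G => b * (√ε * (1 + ∑ a, ph ε (unc G) (Pi.single a 1)))) (gv (ι × κ)) :=
    (((integrable_const 1).add I1).const_mul _).const_mul _
  have hFi : Integrable F (gv (ι × κ)) :=
    ((integrable_const σ).add J1).add ((I2.const_mul _).add (I3.const_mul _))
  have hF0 : ∀ G, 0 ≤ F G := fun G => by
    have h1 := sum_ph_nonneg hε (unc G)
    have h2 : 0 ≤ frob (Tm ε (unc G)) := Real.sqrt_nonneg _
    have h3 := norm_nonneg (Tm ε (unc G))
    simp only [F]
    positivity
  calc _ ≤ ∫⁻ G : ι → κ → ℝ, ENNReal.ofReal (F (fun x => G x.1 x.2)) ∂(gm ι κ) := by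
        refine lintegral_mono fun G => ENNReal.ofReal_le_ofReal ?_
        have := eps_Wm_le hε (Matrix.of G)
        exact add_le_add (add_le_add le_rfl (mul_le_mul_of_nonneg_left this hb)) le_rfl
    _ = ∫⁻ G, ENNReal.ofReal (F G) ∂(gv (ι × κ)) :=
        uncurry_mp.lintegral_comp hF.measurable.ennreal_ofReal
    _ = ENNReal.ofReal (∫ G, F G ∂(gv (ι × κ))) :=
        (ofReal_integral_eq_lintegral_ofReal hFi (Filter.Eventually.of_forall hF0)).symm
    _ ≤ _ := by
        refine ENNReal.ofReal_le_ofReal ?_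
        have e : ∫ G, F G ∂(gv (ι × κ)) = σ + b * (√ε * (1 + ∫ G, ∑ a, ph ε (unc G) (Pi.single a 1) ∂(gv (ι × κ))))
            + (σ * ∫ G, frob (Tm ε (unc G)) ∂(gv (ι × κ)) + τ * ∫ G, ‖Tm ε (unc G)‖ ∂(gv (ι × κ))) := by
          simp only [F]
          have a1 : Integrable (fun G => σ + b * (√ε * (1 + ∑ a, ph ε (unc G) (Pi.single a 1)))) (gv (ι × κ)) :=
            (integrable_const σ).add J1
          have a2 : Integrable (fun G : ι × κ → ℝ => σ * frob (Tm ε (unc G))) (gv (ι × κ)) := I2.const_mul _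
          have a3 : Integrable (fun G : ι × κ → ℝ => τ * ‖Tm ε (unc G)‖) (gv (ι × κ)) := I3.const_mul _
          have a4 : Integrable (fun G : ι × κ → ℝ => σ * frob (Tm ε (unc G)) + τ * ‖Tm ε (unc G)‖)
            (gv (ι × κ)) := a2.add a3
          rw [integral_add a1 a4, integral_add (integrable_const σ) J1, integral_add a2 a3,
            integral_const_mul, integral_const_mul, integral_const_mul, integral_const_mul,
            integral_add (integrable_const 1) I1]
          simp
        rw [e]
        have h1 := E_sum_ph hε hc
        have h2 := E_frob hε hc
        have h3 := E_norm hε p hp hcard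
        gcongr

lemma main_thm {n k : ℕ} (A : Matrix (Fin n) (Fin n) ℝ) (hA : A.PosSemidef)
    (hkn : k ≤ n) (ϱ : ℕ) (hϱk : ϱ + 1 < k) :
    (∫ ω, Real.sqrt (schatten ⊤ (A - nystrom A (Matrix.of ω))) ∂ gaussianEnsemble n k) ≤
      (1 + Real.sqrt ((ϱ:ℝ)/((k:ℝ)-ϱ-1))) * Real.sqrt (sval A ϱ)
        + (Real.exp 1 * Real.sqrt k/((k:ℝ)-ϱ)) * Real.sqrt (∑ i ∈ Finset.Ico ϱ n, sval A i) := by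
  have hϱ : ϱ ≤ n := by omega
  obtain ⟨V, hV1, hV2, hAV⟩ := svd A hA
  have hkϱ : (0:ℝ) < (k:ℝ) - ϱ - 1 := by
    have : ((ϱ + 1 : ℕ) : ℝ) < k := by exact_mod_cast hϱk
    push_cast at this; linarith
  refine le_of_eps _ _ (√(sval A 0) * (1 + (ϱ:ℝ)/((k:ℝ)-ϱ-1))) fun δ hδ => ?_
  have hε : 0 < δ ^ 2 := by positivity
  obtain ⟨ε, hεd⟩ : ∃ ε, ε = δ ^ 2 := ⟨_, rfl⟩
  rw [← hεd] at hε
  have hsε : √ε = δ := by rw [hεd, Real.sqrt_sq hδ.le]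
  have hkϱ' : (0:ℝ) < (k:ℝ) - ϱ := by linarith
  refine integral_le_of_lintegral_le _ _ (fun _ => Real.sqrt_nonneg _) _ (by positivity) ?_
  obtain ⟨σ, hσ⟩ : ∃ σ, σ = √(sval A ϱ) := ⟨_, rfl⟩
  obtain ⟨τ, hτ⟩ : ∃ τ, τ = √(∑ i ∈ Finset.Ico ϱ n, sval A i) := ⟨_, rfl⟩
  obtain ⟨b, hb⟩ : ∃ b, b = √(sval A 0) := ⟨_, rfl⟩
  have hσ0 : 0 ≤ σ := hσ ▸ Real.sqrt_nonneg _
  have hτ0 : 0 ≤ τ := hτ ▸ Real.sqrt_nonneg _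
  have hb0 : 0 ≤ b := hb ▸ Real.sqrt_nonneg _
  rw [← hσ, ← hτ, ← hb]
  obtain ⟨s, hs⟩ : ∃ s : Fin n → ℝ, s = fun i : Fin n => if (i:ℕ) < ϱ then 0 else √(sval A i) := ⟨_, rfl⟩
  have hsσ : ∀ i, |s i| ≤ σ := fun i => by
    rw [hs]
    dsimp only
    split_ifs with h
    · simpa using hσ0
    · rw [abs_of_nonneg (Real.sqrt_nonneg _), hσ]
      exact Real.sqrt_le_sqrt (sval_anti A (not_lt.1 h))
  have hsτ : √(∑ i, s i ^ 2) = τ := by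
    rw [hτ, hs]
    congr 1
    have h1 : ∀ i : Fin n, (if (i:ℕ) < ϱ then 0 else √(sval A i)) ^ 2 =
        (fun j : ℕ => if ϱ ≤ j then sval A j else 0) i := fun i => by
      by_cases h : (i:ℕ) < ϱ
      · simp [h, not_le.2 h]
      · simp [h, not_lt.1 h, Real.sq_sqrt (sval_nonneg A i)]
    rw [Finset.sum_congr rfl fun i _ => h1 i, Fin.sum_univ_eq_sum_range (fun j : ℕ => if ϱ ≤ j then sval A j else 0) n, ← Finset.sum_filter]
    refine Finset.sum_congr ?_ fun _ _ => rfl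
    ext j; simp [and_comm]
  let g : (Fin n → Fin k → ℝ) → (Fin ϱ → Fin k → ℝ) := fun ω a => ω (Fin.castLE hϱ a)
  let F : (Fin n → Fin k → ℝ) → ℝ := fun ω => σ + nrm (diagonal s * Matrix.of ω * Tm ε (Matrix.of (g ω)))
      + b * (ε * nrm (Wm ε (Matrix.of (g ω))))
  have hgc : Continuous (fun ω => (Matrix.of (g ω) : Matrix (Fin ϱ) (Fin k) ℝ)) :=
    continuous_matrix fun i j => (continuous_apply j).comp (continuous_apply (Fin.castLE hϱ i))
  have hofc : Continuous (fun ω : Fin n → Fin k → ℝ => (Matrix.of ω : Matrix (Fin n) (Fin k) ℝ)) :=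
    continuous_id
  have hF : Continuous F :=
    (continuous_const.add (continuous_nrm.comp ((continuous_const.matrix_mul hofc).matrix_mul
      ((continuous_Tm hε).comp hgc)))).add
      (continuous_const.mul (continuous_const.mul (continuous_nrm.comp ((continuous_Wm hε).comp hgc))))
  have hVo : Vᵀ ∈ Matrix.orthogonalGroup (Fin n) ℝ := by
    rw [Matrix.mem_orthogonalGroup_iff, Matrix.transpose_transpose]
    exact hV2
  let gu : (Fin n → Fin k → ℝ) → ℝ≥0∞ := fun x => ENNReal.ofReal ((σ + b * (ε * nrm (Wm ε (Matrix.of (g x)))))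
       + (σ * frob (Tm ε (Matrix.of (g x))) + τ * nrm (Tm ε (Matrix.of (g x)))))
  have hmp : MeasurePreserving g (gm (Fin n) (Fin k)) (gm (Fin ϱ) (Fin k)) :=
    pi_comp_mp _ _ (Fin.castLE_injective hϱ)
  have hprob : IsProbabilityMeasure (gm (Fin n) (Fin k)) := by unfold gm; infer_instance
  have hpv : IsProbabilityMeasure (gv (Fin k)) := by unfold gv; infer_instance
  have hmix : MeasurePreserving (fun (x : (Fin n → Fin k → ℝ) × (Fin n → Fin k → ℝ)) (i : Fin n) =>
      if (i:ℕ) < ϱ then x.1 i else x.2 i) ((gm (Fin n) (Fin k)).prod (gm (Fin n) (Fin k)))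
      (gm (Fin n) (Fin k)) := by
    have := pi_ite_mp (ι := Fin n) (gv (Fin k)) (fun i => (i:ℕ) < ϱ)
    convert this
  calc ∫⁻ ω, ENNReal.ofReal √(schatten ⊤ (A - nystrom A (Matrix.of ω))) ∂ gaussianEnsemble n k
      ≤ ∫⁻ ω, ENNReal.ofReal (F (fun i j => (Vᵀ * Matrix.of ω) i j)) ∂(gm (Fin n) (Fin k)) := by
        refine lintegral_mono fun ω => ENNReal.ofReal_le_ofReal ?_
        have := det_bound hϱ A V (Matrix.of ω) (Vᵀ * Matrix.of ω) (sval A) (sval_nonneg A)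
          (fun i j h => sval_anti A h) hV2 hAV rfl ε hε _ rfl
        rw [← hσ, ← hb, ← hs] at this
        exact this
    _ = ∫⁻ ω, ENNReal.ofReal (F ω) ∂(gm (Fin n) (Fin k)) :=
        (rot_mat Vᵀ hVo).lintegral_comp hF.measurable.ennreal_ofReal
    _ = ∫⁻ x, ENNReal.ofReal (F (fun i => if (i:ℕ) < ϱ then x.1 i else x.2 i))
          ∂((gm (Fin n) (Fin k)).prod (gm (Fin n) (Fin k))) :=
        (hmix.lintegral_comp (f := fun ω => ENNReal.ofReal (F ω)) hF.measurable.ennreal_ofReal).symm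
    _ ≤ ∫⁻ x, ∫⁻ y, ENNReal.ofReal (F (fun i => if (i:ℕ) < ϱ then x i else y i))
          ∂(gm (Fin n) (Fin k)) ∂(gm (Fin n) (Fin k)) := lintegral_prod_le _
    _ ≤ ∫⁻ x, gu x ∂(gm (Fin n) (Fin k)) := by
        refine lintegral_mono fun x => ?_
        have h0 : 0 ≤ σ + b * (ε * nrm (Wm ε (Matrix.of (g x)))) := by
          have := nrm_nonneg (Wm ε (Matrix.of (g x)))
          positivity
        refine le_trans (le_of_eq ?_) (inner_bound s σ τ _ hσ0 hsσ hsτ h0 (Tm ε (Matrix.of (g x))))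
        refine lintegral_congr fun y => ?_
        have e1 : g (fun i => if (i:ℕ) < ϱ then x i else y i) = g x := by
          ext a j; simp [g]
        have e2 : diagonal s * (Matrix.of (fun i => if (i:ℕ) < ϱ then x i else y i)
            : Matrix (Fin n) (Fin k) ℝ) = diagonal s * Matrix.of y := by
          ext i j
          rw [Matrix.diagonal_mul, Matrix.diagonal_mul, hs]
          by_cases h : (i:ℕ) < ϱ <;> simp [h]
        simp only [F]
        rw [e1, e2]
        congr 1
        ring
    _ = ∫⁻ G : Fin ϱ → Fin k → ℝ, ENNReal.ofReal (σ + b * (ε * nrm (Wm ε (Matrix.of G)))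
       + (σ * frob (Tm ε (Matrix.of G)) + τ * nrm (Tm ε (Matrix.of G)))) ∂(gm (Fin ϱ) (Fin k)) := by
        refine hmp.lintegral_comp (f := fun G => ENNReal.ofReal (σ + b * (ε * nrm (Wm ε (Matrix.of G)))
          + (σ * frob (Tm ε (Matrix.of G)) + τ * nrm (Tm ε (Matrix.of G))))) ?_
        refine (Continuous.measurable ?_).ennreal_ofReal
        have hof : Continuous (fun ω : Fin ϱ → Fin k → ℝ => (Matrix.of ω : Matrix (Fin ϱ) (Fin k) ℝ)) :=
          continuous_id
        exact (continuous_const.add (continuous_const.mul (continuous_const.mul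
            (continuous_nrm.comp ((continuous_Wm hε).comp hof))))).add
          ((continuous_const.mul ((BC_frobT hε).1.comp hof)).add
            (continuous_const.mul (continuous_nrm.comp ((continuous_Tm hε).comp hof))))
    _ ≤ _ := outer_bound hε σ τ b hσ0 hτ0 hb0 (k - ϱ) (by omega) (by simp; omega)
    _ = _ := by
        congr 1
        rw [Fintype.card_fin, Fintype.card_fin, hsε, Nat.cast_sub (by omega)]
        ring

end Main

theorem stmt14 {n k : ℕ} (A : Matrix (Fin n) (Fin n) ℝ) (hA : A.PosSemidef)
    (hk : 1 ≤ k) (hkn : k ≤ n) :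
    ∀ ϱ : ℕ, ϱ + 1 < k →
      (∫ ω, Real.sqrt (schatten ⊤ (A - nystrom A (Matrix.of ω))) ∂ gaussianEnsemble n k)
        ≤ (1 + Real.sqrt ((ϱ : ℝ) / ((k : ℝ) - ϱ - 1))) * Real.sqrt (sval A ϱ)
          + (Real.exp 1 * Real.sqrt k / ((k : ℝ) - ϱ))
            * Real.sqrt (∑ i ∈ Finset.Ico ϱ n, sval A i) := by
  exact fun ϱ h => main_thm A hA hkn ϱ h

end PsdSketch
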